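/- arXiv:1805.11855 — 4 statements merged into one kernel-verified Lean document; each statement's English description precedes it below -/
import Mathlib

section
/- Let α > −1 and β < α + 1 be real numbers, and suppose ∫₀ˣ t^{−β} J_α(t) dt ≥ 0 for every x > 0. Then necessarily −α − 1 < β < α + 1 and β ≥ −1/2. -/
open Real

/-- The Bessel function of the first kind of real order `α`. -/
noncomputable def besselJ (α : ℝ) (t : ℝ) : ℝ :=
  ∑' k : ℕ, (-1 : ℝ) ^ k / ((k.factorial : ℝ) * Real.Gamma (α + k + 1)) *
    (t / 2) ^ (2 * (k : ℝ) + α)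

/-!
The function `u t = √t * J_ν t` solves `u'' = ((ν² - 1/4) / t² - 1) u`, an integrable perturbation
of the harmonic oscillator. Hence `exp (i t) (u + i u')` converges to a nonzero limit, so `u` and
`u'` keep oscillating around `0` with an amplitude that does not decay.

If `β < -1/2`, put `γ = -β - 1/2 > 0`: two integrations by parts turn `∫₀ˣ t^(-β) J_α` into
`-x^γ u'(x) + o(x^γ)`, which is negative for arbitrarily large `x`.

If `β ≤ -α - 1`, nonnegativity of the integrals survives multiplication of the integrand by the
nonincreasing weight `t^(α + 1 + β)`, so `∫₀ˣ t^(α + 1) J_α = x^(α + 1) J_(α + 1)(x)` would be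
nonnegative for all `x > 0`, whereas `J_(α + 1)` takes negative values.
-/

open Asymptotics Filter MeasureTheory Set Topology

section Calculus

variable {E : Type*} [NormedAddCommGroup E]

lemma isLittleO_of_isLittleO_deriv [NormedSpace ℝ E] {f f' : ℝ → E} {g g' : ℝ → ℝ}
    (hf : ∀ᶠ x in atTop, HasDerivAt f (f' x) x) (hg : ∀ᶠ x in atTop, HasDerivAt g (g' x) x)
    (hg' : ∀ᶠ x in atTop, 0 ≤ g' x) (hg_top : Tendsto g atTop atTop) (h : f' =o[atTop] g') :
    f =o[atTop] g := by
  refine isLittleO_iff.2 fun ε hε ↦ ?_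
  have hbound : ∀ᶠ x in atTop, ‖f' x‖ ≤ ε / 2 * g' x := by
    filter_upwards [isLittleO_iff.1 h (half_pos hε), hg'] with x hx hx'
    rwa [norm_of_nonneg hx'] at hx
  obtain ⟨a, ha⟩ := eventually_atTop.1 (hf.and (hg.and hbound))
  have hfg (x : ℝ) (hx : a ≤ x) : ‖f x‖ ≤ ‖f a‖ + ε / 2 * (g x - g a) :=
    image_norm_le_of_norm_deriv_right_le_deriv_boundary'
      (B := fun y ↦ ‖f a‖ + ε / 2 * (g y - g a)) (B' := fun y ↦ ε / 2 * g' y)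
      (fun y hy ↦ (ha y hy.1).1.continuousAt.continuousWithinAt)
      (fun y hy ↦ (ha y hy.1).1.hasDerivWithinAt) (by simp)
      (fun y hy ↦ ((((ha y hy.1).2.1.sub_const _).const_mul _).const_add
        _).continuousAt.continuousWithinAt)
      (fun y hy ↦ ((((ha y hy.1).2.1.sub_const _).const_mul _).const_add _).hasDerivWithinAt)
      (fun y hy ↦ (ha y hy.1).2.2) ⟨hx, le_rfl⟩
  filter_upwards [eventually_ge_atTop a, hg_top.eventually_ge_atTop 0,
    (hg_top.const_mul_atTop (half_pos hε)).eventually_ge_atTop (‖f a‖ - ε / 2 * g a)]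
    with x hax hgx hlarge
  rw [norm_of_nonneg hgx]
  linarith [hfg x hax]

lemma isLittleO_rpow_sub_one (s : ℝ) :
    (fun t : ℝ ↦ t ^ (s - 1)) =o[atTop] fun t ↦ t ^ s := by
  refine ((isBigO_refl (fun t : ℝ ↦ t ^ s) atTop).mul_isLittleO
    ((isLittleO_one_iff ℝ).2 tendsto_inv_atTop_zero)).congr' ?_ (.of_forall fun t ↦ mul_one _)
  filter_upwards [eventually_gt_atTop 0] with t ht
  rw [rpow_sub_one ht.ne', div_eq_mul_inv]

lemma hasDerivAt_integral_of_continuousOn_Ioi [NormedSpace ℝ E] [CompleteSpace E] {f : ℝ → E}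
    {a x : ℝ} (hf : ContinuousOn f (Ioi a)) (hint : IntervalIntegrable f volume a x) (hx : a < x) :
    HasDerivAt (fun y ↦ ∫ t in a..y, f t) (f x) x :=
  intervalIntegral.integral_hasDerivAt_right hint
    (hf.stronglyMeasurableAtFilter isOpen_Ioi x hx) (hf.continuousAt (Ioi_mem_nhds hx))

lemma mul_integral_le_integral_norm_mul {f φ : ℝ → ℝ} {a x : ℝ} (hx : a < x)
    (hφ : AntitoneOn φ (Ioi a)) (hφ_nonneg : ∀ t > a, 0 ≤ φ t)
    (hf : IntervalIntegrable f volume a x)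
    (hφf : IntervalIntegrable (fun t ↦ φ t * f t) volume a x) :
    φ x * ∫ t in a..x, f t ≤ ∫ t in a..x, ‖φ t * f t‖ := by
  rw [← intervalIntegral.integral_const_mul]
  refine intervalIntegral.integral_mono_on_of_le_Ioo hx.le (hf.const_mul _) hφf.norm fun t ht ↦ ?_
  calc φ x * f t ≤ φ x * ‖f t‖ := mul_le_mul_of_nonneg_left (le_norm_self _) (hφ_nonneg x hx)
    _ ≤ φ t * ‖f t‖ := mul_le_mul_of_nonneg_right (hφ ht.1 hx ht.2.le) (norm_nonneg _)
    _ = ‖φ t * f t‖ := by rw [norm_mul, norm_of_nonneg (hφ_nonneg t ht.1)]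

lemma monotoneOn_integral_mul_sub_mul_integral {f φ φ' : ℝ → ℝ} {a : ℝ}
    (hf : ContinuousOn f (Ioi a)) (hφ : ∀ t > a, HasDerivAt φ (φ' t) t) (hφ' : ∀ t > a, φ' t ≤ 0)
    (hf_int : ∀ y > a, IntervalIntegrable f volume a y)
    (hφf_int : ∀ y > a, IntervalIntegrable (fun t ↦ φ t * f t) volume a y)
    (hF : ∀ y > a, 0 ≤ ∫ t in a..y, f t) :
    MonotoneOn (fun y ↦ (∫ t in a..y, φ t * f t) - φ y * ∫ t in a..y, f t) (Ioi a) := by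
  have hφ_cont : ContinuousOn φ (Ioi a) := fun t ht ↦ (hφ t ht).continuousAt.continuousWithinAt
  have hderiv (y : ℝ) (hy : a < y) :
      HasDerivAt (fun y ↦ (∫ t in a..y, φ t * f t) - φ y * ∫ t in a..y, f t)
        (-φ' y * ∫ t in a..y, f t) y := by
    refine ((hasDerivAt_integral_of_continuousOn_Ioi (hφ_cont.mul hf) (hφf_int y hy) hy).sub
      ((hφ y hy).mul
        (hasDerivAt_integral_of_continuousOn_Ioi hf (hf_int y hy) hy))).congr_deriv ?_
    simp only [Pi.mul_apply]
    ring
  exact monotoneOn_of_hasDerivWithinAt_nonneg (convex_Ioi a)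
    (fun y hy ↦ (hderiv y hy).continuousAt.continuousWithinAt)
    (fun y hy ↦ (hderiv y (interior_subset hy)).hasDerivWithinAt)
    fun y hy ↦ mul_nonneg (neg_nonneg.2 (hφ' y (interior_subset hy))) (hF y (interior_subset hy))

lemma tendsto_integral_nhdsGT {f : ℝ → E} [NormedSpace ℝ E] {a x : ℝ} (hx : a < x)
    (hf : IntervalIntegrable f volume a x) :
    Tendsto (fun y ↦ ∫ t in a..y, f t) (𝓝[>] a) (𝓝 0) := by
  have hcont := intervalIntegral.continuousOn_primitive_interval' hf left_mem_uIcc a left_mem_uIcc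
  rw [uIcc_of_le hx.le] at hcont
  simpa using (hcont.mono Ioc_subset_Icc_self).tendsto.mono_left
    (nhdsWithin_le_of_mem (Ioc_mem_nhdsGT hx))

-- The nondecreasing function `∫ φ f - φ ∫ f` vanishes at `a`, even if `φ` blows up there, because
-- `φ ∫ f` is dominated by `∫ ‖φ f‖`.
lemma integral_mul_nonneg_of_integral_nonneg {f φ φ' : ℝ → ℝ} {a x : ℝ}
    (hf : ContinuousOn f (Ioi a)) (hφ : ∀ t > a, HasDerivAt φ (φ' t) t)
    (hφ_nonneg : ∀ t > a, 0 ≤ φ t) (hφ' : ∀ t > a, φ' t ≤ 0)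
    (hf_int : ∀ y > a, IntervalIntegrable f volume a y)
    (hφf_int : ∀ y > a, IntervalIntegrable (fun t ↦ φ t * f t) volume a y)
    (hF : ∀ y > a, 0 ≤ ∫ t in a..y, f t) (hx : a < x) :
    0 ≤ ∫ t in a..x, φ t * f t := by
  have hφ_anti : AntitoneOn φ (Ioi a) :=
    antitoneOn_of_hasDerivWithinAt_nonpos (convex_Ioi a)
      (fun t ht ↦ (hφ t ht).continuousAt.continuousWithinAt)
      (fun t ht ↦ (hφ t (interior_subset ht)).hasDerivWithinAt)
      (fun t ht ↦ hφ' t (interior_subset ht))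
  have hmono := monotoneOn_integral_mul_sub_mul_integral hf hφ hφ' hf_int hφf_int hF
  have hlim := (tendsto_integral_nhdsGT hx (hφf_int x hx).norm).const_mul (-2)
  rw [mul_zero] at hlim
  have hdiff : 0 ≤ (∫ t in a..x, φ t * f t) - φ x * ∫ t in a..x, f t := by
    refine le_of_tendsto hlim ?_
    filter_upwards [Ioc_mem_nhdsGT hx] with y hy
    have hφF := mul_integral_le_integral_norm_mul hy.1 hφ_anti hφ_nonneg (hf_int y hy.1)
      (hφf_int y hy.1)
    have hφf := neg_le_of_abs_le (intervalIntegral.norm_integral_le_integral_norm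
      (μ := volume) (f := fun t ↦ φ t * f t) hy.1.le)
    calc -2 * ∫ t in a..y, ‖φ t * f t‖
        ≤ (∫ t in a..y, φ t * f t) - φ y * ∫ t in a..y, f t := by linarith
      _ ≤ (∫ t in a..x, φ t * f t) - φ x * ∫ t in a..x, f t := hmono hy.1 hx hy.2
  linarith [mul_nonneg (hφ_nonneg x hx) (hF x hx)]

end Calculus

section LogDerivBound

variable {E : Type*} [NormedAddCommGroup E] [InnerProductSpace ℝ E] {z z' : ℝ → E} {K k : ℝ → ℝ}
  {a l : ℝ}

lemma abs_two_mul_inner_le_of_norm_le {x y : E} {c : ℝ} (h : ‖y‖ ≤ c * ‖x‖) :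
    |2 * inner ℝ x y| ≤ 2 * c * ‖x‖ ^ 2 := by
  rw [abs_mul, abs_two]
  nlinarith [abs_real_inner_le_norm x y, mul_le_mul_of_nonneg_left h (norm_nonneg x)]

lemma monotoneOn_norm_sq_mul_exp (hz : ∀ t > a, HasDerivAt z (z' t) t)
    (hK : ∀ t > a, HasDerivAt K (k t) t) (hzk : ∀ t > a, ‖z' t‖ ≤ k t * ‖z t‖) :
    MonotoneOn (fun t ↦ ‖z t‖ ^ 2 * exp (2 * K t)) (Ioi a) := by
  have hderiv (t : ℝ) (ht : a < t) :=
    (hz t ht).norm_sq.mul ((hK t ht).const_mul 2).exp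
  refine monotoneOn_of_hasDerivWithinAt_nonneg (convex_Ioi a)
    (fun t ht ↦ (hderiv t ht).continuousAt.continuousWithinAt)
    (fun t ht ↦ (hderiv t (interior_subset ht)).hasDerivWithinAt) fun t ht ↦ ?_
  have hinner := abs_le.1 (abs_two_mul_inner_le_of_norm_le (hzk t (interior_subset ht)))
  nlinarith [exp_pos (2 * K t)]

lemma antitoneOn_norm_sq_mul_exp_neg (hz : ∀ t > a, HasDerivAt z (z' t) t)
    (hK : ∀ t > a, HasDerivAt K (k t) t) (hzk : ∀ t > a, ‖z' t‖ ≤ k t * ‖z t‖) :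
    AntitoneOn (fun t ↦ ‖z t‖ ^ 2 * exp (-(2 * K t))) (Ioi a) := by
  have hderiv (t : ℝ) (ht : a < t) :=
    (hz t ht).norm_sq.mul ((hK t ht).const_mul 2).fun_neg.exp
  refine antitoneOn_of_hasDerivWithinAt_nonpos (convex_Ioi a)
    (fun t ht ↦ (hderiv t ht).continuousAt.continuousWithinAt)
    (fun t ht ↦ (hderiv t (interior_subset ht)).hasDerivWithinAt) fun t ht ↦ ?_
  have hinner := abs_le.1 (abs_two_mul_inner_le_of_norm_le (hzk t (interior_subset ht)))
  nlinarith [exp_pos (-(2 * K t))]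

lemma isBigO_one_of_norm_deriv_le (hz : ∀ t > a, HasDerivAt z (z' t) t)
    (hK : ∀ t > a, HasDerivAt K (k t) t) (hzk : ∀ t > a, ‖z' t‖ ≤ k t * ‖z t‖)
    (hl : Tendsto K atTop (𝓝 l)) : z =O[atTop] (1 : ℝ → ℝ) := by
  have hanti := antitoneOn_norm_sq_mul_exp_neg hz hK hzk
  set C := ‖z (a + 1)‖ ^ 2 * exp (-(2 * K (a + 1)))
  have hsq : (fun t ↦ ‖z t‖ ^ 2) =O[atTop] fun t ↦ exp (2 * K t) := by
    refine .of_bound C ?_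
    filter_upwards [eventually_ge_atTop (a + 1)] with t ht
    have hCt : ‖z t‖ ^ 2 * exp (-(2 * K t)) ≤ C :=
      hanti (mem_Ioi.2 (lt_add_one a)) (mem_Ioi.2 (by linarith)) ht
    rwa [exp_neg, ← div_eq_mul_inv, div_le_iff₀ (exp_pos _), ← norm_of_nonneg (exp_nonneg _),
      ← norm_of_nonneg (sq_nonneg ‖z t‖)] at hCt
  have hone : (fun t ↦ exp (2 * K t)) =O[atTop] (1 : ℝ → ℝ) := (hl.const_mul 2).rexp.isBigO_one ℝ
  refine (IsBigO.of_pow two_ne_zero ?_ : (fun t ↦ ‖z t‖) =O[atTop] (1 : ℝ → ℝ)).of_norm_left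
  simpa [Pi.pow_def] using hsq.trans hone

lemma exists_tendsto_of_norm_deriv_le [CompleteSpace E] (hz : ∀ t > a, HasDerivAt z (z' t) t)
    (hK : ∀ t > a, HasDerivAt K (k t) t) (hzk : ∀ t > a, ‖z' t‖ ≤ k t * ‖z t‖)
    (hk : ∀ t > a, 0 ≤ k t) (hl : Tendsto K atTop (𝓝 l)) : ∃ ζ, Tendsto z atTop (𝓝 ζ) := by
  obtain ⟨M, hM⟩ := (isBigO_one_of_norm_deriv_le hz hK hzk hl).bound
  obtain ⟨b, hb⟩ := eventually_atTop.1 (hM.and (eventually_gt_atTop a))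
  have hk_int : IntegrableOn k (Ioi b) :=
    integrableOn_Ioi_deriv_of_nonneg' (fun t ht ↦ hK t (hb t ht).2)
      (fun t ht ↦ hk t (hb t ht.le).2) hl
  have hz'_meas : AEStronglyMeasurable z' (volume.restrict (Ioi b)) := by
    refine (aestronglyMeasurable_deriv z _).congr ?_
    filter_upwards [ae_restrict_mem measurableSet_Ioi] with t ht
    exact (hz t (hb t (le_of_lt ht)).2).deriv
  have hz'_int : IntegrableOn z' (Ioi b) := by
    refine (hk_int.mul_const M).mono' hz'_meas ?_
    filter_upwards [ae_restrict_mem measurableSet_Ioi] with t ht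
    obtain ⟨hMt, hat⟩ := hb t (le_of_lt ht)
    exact (hzk t hat).trans (mul_le_mul_of_nonneg_left (by simpa using hMt) (hk t hat))
  exact ⟨_, tendsto_limUnder_of_hasDerivAt_of_integrableOn_Ioi
    (fun t ht ↦ hz t (hb t (le_of_lt ht)).2) hz'_int⟩

lemma ne_zero_of_tendsto_of_norm_deriv_le {ζ : E} {b : ℝ} (hz : ∀ t > a, HasDerivAt z (z' t) t)
    (hK : ∀ t > a, HasDerivAt K (k t) t) (hzk : ∀ t > a, ‖z' t‖ ≤ k t * ‖z t‖)
    (hl : Tendsto K atTop (𝓝 l)) (hζ : Tendsto z atTop (𝓝 ζ)) (hab : a < b) (hb : z b ≠ 0) :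
    ζ ≠ 0 := by
  have hmono := monotoneOn_norm_sq_mul_exp hz hK hzk
  have hlim : ‖z b‖ ^ 2 * exp (2 * K b) ≤ ‖ζ‖ ^ 2 * exp (2 * l) := by
    refine ge_of_tendsto ((hζ.norm.pow 2).mul (hl.const_mul 2).rexp) ?_
    filter_upwards [eventually_ge_atTop b] with t ht
    exact hmono hab (hab.trans_le ht) ht
  rintro rfl
  have hpos : 0 < ‖z b‖ ^ 2 * exp (2 * K b) := by positivity
  rw [norm_zero, zero_pow two_ne_zero, zero_mul] at hlim
  exact hpos.not_ge hlim

end LogDerivBound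

/-- `u` is a solution on `(a, ∞)`, with derivative `v`, of the harmonic oscillator equation
perturbed by `q`, namely `u'' = (q - 1) u`. -/
structure IsPerturbedOscillator (q u v : ℝ → ℝ) (a : ℝ) : Prop where
  hasDerivAt : ∀ t > a, HasDerivAt u (v t) t
  hasDerivAt_deriv : ∀ t > a, HasDerivAt v ((q t - 1) * u t) t

namespace IsPerturbedOscillator

variable {q u v K : ℝ → ℝ} {a b l : ℝ}

open Complex in
lemma hasDerivAt_cexp_mul (h : IsPerturbedOscillator q u v a) {t : ℝ} (ht : a < t) :
    HasDerivAt (fun t : ℝ ↦ cexp (t * I) * (u t + v t * I))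
      (cexp (t * I) * (I * (q t * u t))) t := by
  have hexp : HasDerivAt (fun t : ℝ ↦ cexp (t * I)) (cexp (t * I) * I) t := by
    simpa using ((hasDerivAt_id (t : ℂ)).mul_const I).cexp.comp_ofReal
  refine (hexp.mul ((h.hasDerivAt t ht).ofReal_comp.add
    ((h.hasDerivAt_deriv t ht).ofReal_comp.mul_const I))).congr_deriv ?_
  simp only [Pi.add_apply]
  push_cast
  linear_combination cexp (t * I) * v t * I_sq

open Complex in
lemma norm_cexp_mul_le (q u v t : ℝ) :
    ‖cexp (t * I) * (I * (q * u))‖ ≤ |q| * ‖cexp (t * I) * (u + v * I)‖ := by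
  have hre : |u| ≤ ‖(u + v * I : ℂ)‖ := by simpa using abs_re_le_norm (u + v * I : ℂ)
  simpa [norm_exp_ofReal_mul_I] using mul_le_mul_of_nonneg_left hre (abs_nonneg q)

-- Variation of parameters: in the rotating frame only the integrable perturbation `q` is left.
open Complex in
lemma exists_tendsto_cexp_mul (h : IsPerturbedOscillator q u v a)
    (hK : ∀ t > a, HasDerivAt K |q t| t) (hl : Tendsto K atTop (𝓝 l)) (hab : a < b)
    (hb : u b ≠ 0) :
    ∃ ζ ≠ 0, Tendsto (fun t : ℝ ↦ cexp (t * I) * (u t + v t * I)) atTop (𝓝 ζ) := by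
  have hz (t : ℝ) (ht : a < t) := h.hasDerivAt_cexp_mul ht
  have hzq (t : ℝ) (_ : t > a) := norm_cexp_mul_le (q t) (u t) (v t) t
  obtain ⟨ζ, hζ⟩ := exists_tendsto_of_norm_deriv_le hz hK hzq (fun t _ ↦ abs_nonneg (q t)) hl
  refine ⟨ζ, ne_zero_of_tendsto_of_norm_deriv_le hz hK hzq hl hζ hab ?_, hζ⟩
  refine mul_ne_zero (Complex.exp_ne_zero _) fun h0 ↦ hb ?_
  simpa using congrArg re h0

lemma isBigO_one (h : IsPerturbedOscillator q u v a)
    (hK : ∀ t > a, HasDerivAt K |q t| t) (hl : Tendsto K atTop (𝓝 l)) :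
    u =O[atTop] (1 : ℝ → ℝ) := by
  have hz (t : ℝ) (ht : t > a) := h.hasDerivAt_cexp_mul ht
  have hzq (t : ℝ) (_ : t > a) := norm_cexp_mul_le (q t) (u t) (v t) t
  have hz_bdd := isBigO_one_of_norm_deriv_le hz hK hzq hl
  refine (IsBigO.of_bound 1 (.of_forall fun t ↦ ?_)).trans hz_bdd
  simpa [Complex.norm_exp_ofReal_mul_I] using Complex.abs_re_le_norm (u t + v t * Complex.I : ℂ)

-- Follow `u + iv` along times `θ + 2πn`, at which the phase of the rotating frame is constant.
open Complex in
lemma exists_seq_tendsto (h : IsPerturbedOscillator q u v a)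
    (hK : ∀ t > a, HasDerivAt K |q t| t) (hl : Tendsto K atTop (𝓝 l)) (hab : a < b)
    (hb : u b ≠ 0) :
    ∃ r > (0 : ℝ), ∀ w : ℂ, ‖w‖ = 1 → ∃ t : ℕ → ℝ, Tendsto t atTop atTop ∧
      Tendsto (fun n ↦ (u (t n) + v (t n) * I : ℂ)) atTop (𝓝 (r * w)) := by
  obtain ⟨ζ, hζ0, hζ⟩ := h.exists_tendsto_cexp_mul hK hl hab hb
  refine ⟨‖ζ‖, norm_pos_iff.2 hζ0, fun w hw ↦ ?_⟩
  have hw0 : w ≠ 0 := norm_ne_zero_iff.1 (by simp [hw])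
  set θ := arg (ζ / w)
  have hθ : (cexp (θ * I))⁻¹ * ζ = ‖ζ‖ * w := by
    have hpolar : ‖ζ‖ * cexp (θ * I) = ζ / w := by simpa [hw] using norm_mul_exp_arg_mul_I (ζ / w)
    rw [eq_div_iff hw0] at hpolar
    rw [inv_mul_eq_iff_eq_mul₀ (Complex.exp_ne_zero _)]
    linear_combination -hpolar
  have ht : Tendsto (fun n : ℕ ↦ θ + n * (2 * π)) atTop atTop :=
    tendsto_atTop_add_const_left _ _ (tendsto_natCast_atTop_atTop.atTop_mul_const two_pi_pos)
  refine ⟨_, ht, hθ ▸ ((hζ.comp ht).const_mul (cexp (θ * I))⁻¹).congr fun n ↦ ?_⟩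
  have hphase : cexp ((θ + n * (2 * π) : ℝ) * I) = cexp (θ * I) := by
    have hperiod := exp_mul_I_periodic.nat_mul n (θ : ℂ)
    simpa using hperiod
  rw [Function.comp_apply, hphase, inv_mul_cancel_left₀ (Complex.exp_ne_zero _)]

lemma frequently_neg (h : IsPerturbedOscillator q u v a)
    (hK : ∀ t > a, HasDerivAt K |q t| t) (hl : Tendsto K atTop (𝓝 l)) (hab : a < b)
    (hb : u b ≠ 0) : ∃ᶠ t in atTop, u t < 0 := by
  obtain ⟨r, hr, hcircle⟩ := h.exists_seq_tendsto hK hl hab hb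
  obtain ⟨t, ht, hlim⟩ := hcircle (-1) (by simp)
  have hu : Tendsto (fun n ↦ u (t n)) atTop (𝓝 (-r)) := by
    simpa [Function.comp_def] using (Complex.continuous_re.tendsto _).comp hlim
  exact ht.frequently (hu.eventually_lt_const (neg_lt_zero.2 hr)).frequently

lemma exists_frequently_lt_deriv (h : IsPerturbedOscillator q u v a)
    (hK : ∀ t > a, HasDerivAt K |q t| t) (hl : Tendsto K atTop (𝓝 l)) (hab : a < b)
    (hb : u b ≠ 0) : ∃ c > 0, ∃ᶠ t in atTop, c < v t := by
  obtain ⟨r, hr, hcircle⟩ := h.exists_seq_tendsto hK hl hab hb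
  obtain ⟨t, ht, hlim⟩ := hcircle Complex.I (by simp)
  have hv : Tendsto (fun n ↦ v (t n)) atTop (𝓝 r) := by
    simpa [Function.comp_def] using (Complex.continuous_im.tendsto _).comp hlim
  exact ⟨r / 2, half_pos hr,
    ht.frequently (hv.eventually_const_lt (half_lt_self hr)).frequently⟩

-- Replacing `u` by `q u - v'` and integrating by parts twice leaves `∫ t ^ (γ - 2) u`.
lemma isLittleO_primitive_add {F : ℝ → ℝ} {γ : ℝ} (h : IsPerturbedOscillator q u v a)
    (hq : q =o[atTop] fun t ↦ t⁻¹) (hu : u =O[atTop] (1 : ℝ → ℝ)) (hγ : 0 < γ)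
    (hF : ∀ᶠ t in atTop, HasDerivAt F (t ^ γ * u t) t) :
    (fun t ↦ F t + t ^ γ * v t) =o[atTop] fun t ↦ t ^ γ := by
  set G : ℝ → ℝ := fun t ↦ F t + t ^ γ * v t - γ * (t ^ (γ - 1) * u t) with hG_def
  have hG : ∀ᶠ t in atTop,
      HasDerivAt G (t ^ γ * q t * u t - γ * (γ - 1) * t ^ (γ - 2) * u t) t := by
    filter_upwards [hF, eventually_gt_atTop a, eventually_gt_atTop 0] with t hFt hat ht
    refine ((hFt.add ((hasDerivAt_rpow_const (.inl ht.ne')).mul (h.hasDerivAt_deriv t hat))).sub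
      (((hasDerivAt_rpow_const (.inl ht.ne')).mul (h.hasDerivAt t hat)).const_mul
        γ)).congr_deriv ?_
    rw [show γ - 1 - 1 = γ - 2 by ring]
    ring
  have hG' : (fun t ↦ t ^ γ * q t * u t - γ * (γ - 1) * t ^ (γ - 2) * u t)
      =o[atTop] fun t ↦ γ * t ^ (γ - 1) := by
    have hqu : (fun t ↦ t ^ γ * q t * u t) =o[atTop] fun t ↦ t ^ (γ - 1) := by
      refine (((isBigO_refl _ _).mul_isLittleO hq).mul_isBigO hu).congr' .rfl ?_
      filter_upwards [eventually_gt_atTop 0] with t ht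
      rw [Pi.one_apply, mul_one, rpow_sub_one ht.ne', div_eq_mul_inv]
    have hcu : (fun t ↦ γ * (γ - 1) * t ^ (γ - 2) * u t) =o[atTop] fun t ↦ t ^ (γ - 1) := by
      have := (((isLittleO_rpow_sub_one (γ - 1)).const_mul_left (γ * (γ - 1))).mul_isBigO hu)
      simpa [sub_sub, one_add_one_eq_two] using this
    exact (hqu.sub hcu).const_mul_right hγ.ne'
  have hGo : G =o[atTop] fun t ↦ t ^ γ := by
    refine isLittleO_of_isLittleO_deriv hG ?_ ?_ (tendsto_rpow_atTop hγ) hG'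
    · filter_upwards [eventually_gt_atTop 0] with t ht
      exact hasDerivAt_rpow_const (.inl ht.ne')
    · filter_upwards [eventually_gt_atTop 0] with t ht
      positivity
  have hcorr : (fun t ↦ γ * (t ^ (γ - 1) * u t)) =o[atTop] fun t ↦ t ^ γ := by
    simpa using ((isLittleO_rpow_sub_one γ).mul_isBigO hu).const_mul_left γ
  simpa [hG_def] using hGo.add hcorr

lemma frequently_primitive_neg {F : ℝ → ℝ} {γ : ℝ} (h : IsPerturbedOscillator q u v a)
    (hK : ∀ t > a, HasDerivAt K |q t| t) (hl : Tendsto K atTop (𝓝 l)) (hab : a < b)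
    (hb : u b ≠ 0) (hq : q =o[atTop] fun t ↦ t⁻¹) (hγ : 0 < γ)
    (hF : ∀ᶠ t in atTop, HasDerivAt F (t ^ γ * u t) t) : ∃ᶠ t in atTop, F t < 0 := by
  obtain ⟨c, hc, hvc⟩ := h.exists_frequently_lt_deriv hK hl hab hb
  have hFv := isLittleO_iff.1 (h.isLittleO_primitive_add hq (h.isBigO_one hK hl) hγ hF) hc
  refine (hvc.and_eventually (hFv.and (eventually_gt_atTop 0))).mono ?_
  rintro t ⟨hct, hFt, ht⟩
  have hpow : 0 < t ^ γ := rpow_pos_of_pos ht γ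
  rw [norm_of_nonneg hpow.le] at hFt
  nlinarith [(le_norm_self _).trans hFt]

end IsPerturbedOscillator

section ExponentialSeries

variable {𝕜 : Type*} [RCLike 𝕜] {a : ℕ → 𝕜} {C : ℝ}

lemma summable_mul_pow_div_factorial (ha : ∀ k, ‖a k‖ ≤ C) (s : 𝕜) :
    Summable fun k ↦ a k * (s ^ k / k.factorial) := by
  refine .of_norm_bounded ((Real.summable_pow_div_factorial ‖s‖).mul_left C) fun k ↦ ?_
  rw [norm_mul, norm_div, norm_pow, RCLike.norm_natCast]
  exact mul_le_mul_of_nonneg_right (ha k) (by positivity)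

lemma natCast_succ_mul_div_factorial_succ {F : Type*} [Field F] [CharZero F] (x : F) (k : ℕ) :
    ((k + 1 : ℕ) : F) * x / (k + 1).factorial = x / k.factorial := by
  rw [Nat.factorial_succ, Nat.cast_mul, mul_div_mul_left _ _ (Nat.cast_ne_zero.2 k.succ_ne_zero)]

lemma hasDerivAt_tsum_mul_pow_div_factorial (ha : ∀ k, ‖a k‖ ≤ C) (s : 𝕜) :
    HasDerivAt (fun z ↦ ∑' k, a k * (z ^ k / k.factorial))
      (∑' k, a (k + 1) * (s ^ k / k.factorial)) s := by
  have hC : 0 ≤ C := (norm_nonneg _).trans (ha 0)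
  set R := ‖s‖ + 1
  have hterm (k : ℕ) (z : 𝕜) (_ : z ∈ Metric.ball 0 R) : HasDerivAt
      (fun z ↦ a k * (z ^ k / k.factorial)) (a k * (k * z ^ (k - 1) / k.factorial)) z :=
    ((hasDerivAt_pow k z).div_const _).const_mul _
  have hbound (k : ℕ) (z : 𝕜) (hz : z ∈ Metric.ball 0 R) :
      ‖a k * (k * z ^ (k - 1) / k.factorial)‖ ≤ C * (k * R ^ (k - 1) / k.factorial) := by
    rw [norm_mul, norm_div, norm_mul, norm_pow, RCLike.norm_natCast, RCLike.norm_natCast]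
    have hzR : ‖z‖ ≤ R := (mem_ball_zero_iff.1 hz).le
    gcongr
    exact ha k
  have hsum : Summable fun k : ℕ ↦ C * (k * R ^ (k - 1) / k.factorial) := by
    rw [← summable_nat_add_iff 1]
    simpa only [add_tsub_cancel_right, natCast_succ_mul_div_factorial_succ] using
      (summable_pow_div_factorial R).mul_left C
  have hs : s ∈ Metric.ball 0 R := by simp [R]
  refine (hasDerivAt_tsum_of_isPreconnected hsum Metric.isOpen_ball
    (convex_ball 0 R).isPreconnected hterm hbound hs
    (summable_mul_pow_div_factorial ha s) hs).congr_deriv ?_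
  rw [(Summable.of_norm_bounded hsum fun k ↦ hbound k s hs).tsum_eq_zero_add]
  simp only [add_tsub_cancel_right, natCast_succ_mul_div_factorial_succ, Nat.cast_zero, zero_mul,
    zero_div, mul_zero, zero_add]

end ExponentialSeries

section BesselClifford

variable (ν s : ℝ)

lemma inv_Gamma_eq_self_mul_inv_Gamma_add_one : (Gamma s)⁻¹ = s * (Gamma (s + 1))⁻¹ := by
  rcases eq_or_ne s 0 with rfl | hs
  · rw [zero_add, Gamma_zero, inv_zero, zero_mul]
  · rw [Gamma_add_one hs, mul_inv, mul_inv_cancel_left₀ hs]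

lemma exists_norm_inv_Gamma_le : ∃ C, ∀ k : ℕ, ‖(Gamma (ν + k + 1))⁻¹‖ ≤ C := by
  refine isBigO_one_nat_atTop_iff.1 (.of_bound 1 ?_)
  have hlarge : Tendsto (fun k : ℕ ↦ ν + k + 1) atTop atTop :=
    tendsto_atTop_add_const_right _ _
      (tendsto_atTop_add_const_left _ _ tendsto_natCast_atTop_atTop)
  filter_upwards [hlarge.eventually_ge_atTop 2] with k hk
  have hGamma := Gamma_strictMonoOn_Ici.monotoneOn self_mem_Ici hk hk
  rw [Gamma_two] at hGamma
  rw [norm_inv, norm_of_nonneg (zero_le_one.trans hGamma), norm_one, mul_one]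
  exact inv_le_one_of_one_le₀ hGamma

/-- The Bessel–Clifford function of order `ν`, the entire function through which the Bessel function
factors as `J_ν t = (t / 2) ^ ν * besselClifford ν (-t ^ 2 / 4)`. At the poles of `Γ`, Mathlib's
`(Gamma x)⁻¹` is `0`, the value there of the entire function `1 / Γ`. -/
noncomputable def besselClifford : ℝ :=
  ∑' k : ℕ, (Gamma (ν + k + 1))⁻¹ * (s ^ k / k.factorial)

lemma summable_besselClifford :
    Summable fun k : ℕ ↦ (Gamma (ν + k + 1))⁻¹ * (s ^ k / k.factorial) :=
  (exists_norm_inv_Gamma_le ν).elim fun _ hC ↦ summable_mul_pow_div_factorial hC s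

lemma besselClifford_zero_right : besselClifford ν 0 = (Gamma (ν + 1))⁻¹ := by
  rw [besselClifford, tsum_eq_single 0 fun k hk ↦ by simp [hk]]
  simp

lemma hasDerivAt_besselClifford :
    HasDerivAt (besselClifford ν) (besselClifford (ν + 1) s) s := by
  obtain ⟨C, hC⟩ := exists_norm_inv_Gamma_le ν
  refine (hasDerivAt_tsum_mul_pow_div_factorial hC s).congr_deriv (tsum_congr fun k ↦ ?_)
  rw [Nat.cast_succ, add_comm (k : ℝ), ← add_assoc]

lemma continuous_besselClifford : Continuous (besselClifford ν) :=
  continuous_iff_continuousAt.2 fun s ↦ (hasDerivAt_besselClifford ν s).continuousAt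

lemma besselClifford_eq_add :
    besselClifford ν s = (ν + 1) * besselClifford (ν + 1) s + s * besselClifford (ν + 2) s := by
  set c : ℕ → ℝ := fun k ↦ (Gamma (ν + 1 + k + 1))⁻¹ * (s ^ k / k.factorial) with hc
  have hsum : Summable c := summable_besselClifford (ν + 1) s
  have hterm (k : ℕ) :
      (Gamma (ν + k + 1))⁻¹ * (s ^ k / k.factorial) = (ν + 1) * c k + k * c k := by
    rw [inv_Gamma_eq_self_mul_inv_Gamma_add_one, hc]
    ring_nf
  have hshift (k : ℕ) : ((k + 1 : ℕ) : ℝ) * c (k + 1) =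
      s * ((Gamma (ν + 2 + k + 1))⁻¹ * (s ^ k / k.factorial)) := by
    simp only [hc]
    rw [show ν + 2 + k + 1 = ν + 1 + (k + 1 : ℕ) + 1 by push_cast; ring, mul_left_comm,
      ← mul_div_assoc, natCast_succ_mul_div_factorial_succ, pow_succ]
    ring
  have hsum' : Summable fun k : ℕ ↦ (k : ℝ) * c k := by
    rw [← summable_nat_add_iff 1]
    simpa only [hshift] using (summable_besselClifford (ν + 2) s).mul_left s
  calc besselClifford ν s = (ν + 1) * besselClifford (ν + 1) s + ∑' k : ℕ, k * c k := by
        rw [besselClifford, tsum_congr hterm, (hsum.mul_left _).tsum_add hsum', tsum_mul_left]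
        rfl
    _ = (ν + 1) * besselClifford (ν + 1) s + s * besselClifford (ν + 2) s := by
        rw [hsum'.tsum_eq_zero_add, Nat.cast_zero, zero_mul, zero_add, tsum_congr hshift,
          tsum_mul_left]
        rfl

end BesselClifford

section BesselJ

variable {ν r t x : ℝ}

lemma besselJ_eq_rpow_mul_besselClifford (ht : 0 < t) :
    besselJ ν t = (t / 2) ^ ν * besselClifford ν (-(t ^ 2 / 4)) := by
  rw [besselJ, besselClifford, ← tsum_mul_left]
  refine tsum_congr fun k ↦ ?_
  have hpow : (t / 2) ^ (2 * (k : ℝ) + ν) = (t / 2) ^ ν * (t ^ 2 / 4) ^ k := by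
    rw [add_comm, rpow_add (half_pos ht), rpow_mul (half_pos ht).le, rpow_two, rpow_natCast]
    ring
  rw [hpow, neg_pow (t ^ 2 / 4), div_eq_mul_inv, mul_inv]
  ring

lemma rpow_mul_besselJ_eq (r : ℝ) (ht : 0 < t) :
    t ^ r * besselJ ν t = 2 ^ (-ν) * (t ^ (r + ν) * besselClifford ν (-(t ^ 2 / 4))) := by
  rw [besselJ_eq_rpow_mul_besselClifford ht, div_rpow ht.le zero_le_two, rpow_add ht,
    rpow_neg zero_le_two]
  ring

lemma hasDerivAt_besselJ (ht : 0 < t) :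
    HasDerivAt (besselJ ν) (ν / t * besselJ ν t - besselJ (ν + 1) t) t := by
  have harg : HasDerivAt (fun y : ℝ ↦ -(y ^ 2 / 4)) (-(t / 2)) t :=
    (((hasDerivAt_pow 2 t).div_const 4).fun_neg).congr_deriv (by norm_num; ring)
  have hpow : HasDerivAt (fun y : ℝ ↦ (y / 2) ^ ν) (1 / 2 * ν * (t / 2) ^ (ν - 1)) t :=
    ((hasDerivAt_id t).div_const 2).rpow_const (.inl (half_pos ht).ne')
  refine ((hpow.mul ((hasDerivAt_besselClifford ν _).comp t harg)).congr_of_eventuallyEq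
    ?_).congr_deriv ?_
  · filter_upwards [lt_mem_nhds ht] with y hy using besselJ_eq_rpow_mul_besselClifford hy
  · rw [besselJ_eq_rpow_mul_besselClifford ht, besselJ_eq_rpow_mul_besselClifford ht,
      rpow_sub_one (half_pos ht).ne', rpow_add_one (half_pos ht).ne', Function.comp_apply]
    field_simp
    ring

lemma continuousOn_besselJ : ContinuousOn (besselJ ν) (Ioi 0) :=
  fun _ ht ↦ (hasDerivAt_besselJ ht).continuousAt.continuousWithinAt

lemma besselJ_add_besselJ_add_two (ht : 0 < t) :
    besselJ ν t + besselJ (ν + 2) t = 2 * (ν + 1) / t * besselJ (ν + 1) t := by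
  rw [besselJ_eq_rpow_mul_besselClifford ht, besselJ_eq_rpow_mul_besselClifford ht,
    besselJ_eq_rpow_mul_besselClifford ht, besselClifford_eq_add ν, rpow_add (half_pos ht) ν 2,
    rpow_two, rpow_add_one (half_pos ht).ne']
  field_simp
  ring

lemma hasDerivAt_besselJ_add_one (ht : 0 < t) :
    HasDerivAt (besselJ (ν + 1)) (besselJ ν t - (ν + 1) / t * besselJ (ν + 1) t) t := by
  refine (hasDerivAt_besselJ ht).congr_deriv ?_
  rw [add_assoc, one_add_one_eq_two]
  linear_combination -besselJ_add_besselJ_add_two (ν := ν) ht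

lemma continuous_besselClifford_neg_sq (ν : ℝ) :
    Continuous fun t : ℝ ↦ besselClifford ν (-(t ^ 2 / 4)) :=
  (continuous_besselClifford ν).comp (by fun_prop)

lemma exists_besselJ_ne_zero (hν : -1 < ν) : ∃ t > 0, besselJ ν t ≠ 0 := by
  have hlim : Tendsto (fun t : ℝ ↦ besselClifford ν (-(t ^ 2 / 4))) (𝓝[>] 0)
      (𝓝 (Gamma (ν + 1))⁻¹) :=
    ((continuous_besselClifford_neg_sq ν).tendsto' 0 _
      (by norm_num [besselClifford_zero_right])).mono_left nhdsWithin_le_nhds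
  have hne : (Gamma (ν + 1))⁻¹ ≠ 0 := inv_ne_zero (Gamma_pos_of_pos (by linarith)).ne'
  obtain ⟨t, hCt, ht⟩ := ((hlim.eventually_ne hne).and self_mem_nhdsWithin).exists
  refine ⟨t, ht, ?_⟩
  rw [besselJ_eq_rpow_mul_besselClifford ht]
  exact mul_ne_zero (rpow_pos_of_pos (half_pos ht) ν).ne' hCt

lemma intervalIntegrable_rpow_mul_besselJ (h : -1 < r + ν) (hx : 0 < x) :
    IntervalIntegrable (fun t ↦ t ^ r * besselJ ν t) volume 0 x := by
  refine (((intervalIntegral.intervalIntegrable_rpow' h).mul_continuousOn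
    (continuous_besselClifford_neg_sq ν).continuousOn).const_mul (2 ^ (-ν))).congr ?_
  rw [uIoc_of_le hx.le]
  intro t ht
  exact (rpow_mul_besselJ_eq r ht.1).symm

lemma tendsto_rpow_mul_besselJ_nhdsGT_zero (h : 0 < r + ν) :
    Tendsto (fun t ↦ t ^ r * besselJ ν t) (𝓝[>] 0) (𝓝 0) := by
  have hcont : Continuous fun t : ℝ ↦
      2 ^ (-ν) * (t ^ (r + ν) * besselClifford ν (-(t ^ 2 / 4))) :=
    continuous_const.mul ((continuous_id.rpow_const fun _ ↦ .inr h.le).mul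
      (continuous_besselClifford_neg_sq ν))
  refine ((hcont.tendsto' 0 0 ?_).mono_left nhdsWithin_le_nhds).congr' ?_
  · rw [zero_rpow h.ne', zero_mul, mul_zero]
  · filter_upwards [self_mem_nhdsWithin] with t ht using (rpow_mul_besselJ_eq r ht).symm

lemma integral_rpow_add_one_mul_besselJ (hν : -1 < ν) (hx : 0 < x) :
    ∫ t in 0..x, t ^ (ν + 1) * besselJ ν t = x ^ (ν + 1) * besselJ (ν + 1) x := by
  have hderiv (t : ℝ) (ht : 0 < t) : HasDerivAt (fun t ↦ t ^ (ν + 1) * besselJ (ν + 1) t)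
      (t ^ (ν + 1) * besselJ ν t) t := by
    refine ((hasDerivAt_rpow_const (.inl ht.ne')).mul
      (hasDerivAt_besselJ_add_one ht)).congr_deriv ?_
    rw [rpow_sub_one ht.ne']
    ring
  rw [intervalIntegral.integral_eq_sub_of_hasDerivAt_of_tendsto hx (fun t ht ↦ hderiv t ht.1)
    (intervalIntegrable_rpow_mul_besselJ (by linarith) hx)
    (tendsto_rpow_mul_besselJ_nhdsGT_zero (by linarith))
    ((hderiv x hx).continuousAt.tendsto.mono_left nhdsWithin_le_nhds), sub_zero]

lemma integral_rpow_mul_besselJ_nonneg_of_le {s : ℝ} (hs : -1 < s + ν) (hsr : s ≤ r)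
    (h : ∀ y > 0, 0 ≤ ∫ t in 0..y, t ^ r * besselJ ν t) (hx : 0 < x) :
    0 ≤ ∫ t in 0..x, t ^ s * besselJ ν t := by
  have hmul : EqOn (fun t ↦ t ^ s * besselJ ν t)
      (fun t ↦ t ^ (s - r) * (t ^ r * besselJ ν t)) (Ioi 0) := fun t ht ↦ by
    simp only [← mul_assoc, ← rpow_add (mem_Ioi.1 ht), sub_add_cancel]
  have hsub {y : ℝ} (hy : 0 < y) : uIoc 0 y ⊆ Ioi 0 := uIoc_of_le hy.le ▸ Ioc_subset_Ioi_self
  rw [intervalIntegral.integral_congr_Ioo_of_le hx.le (hmul.mono Ioo_subset_Ioi_self)]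
  refine integral_mul_nonneg_of_integral_nonneg (φ' := fun t ↦ (s - r) * t ^ (s - r - 1))
    (fun t ht ↦ ?_) (fun t ht ↦ hasDerivAt_rpow_const (.inl ht.ne'))
    (fun t ht ↦ (rpow_pos_of_pos ht _).le) (fun t ht ↦ ?_)
    (fun y hy ↦ intervalIntegrable_rpow_mul_besselJ (by linarith) hy)
    (fun y hy ↦ (intervalIntegrable_rpow_mul_besselJ hs hy).congr (hmul.mono (hsub hy))) h hx
  · exact (continuousAt_rpow_const t r (.inl ht.ne')).continuousWithinAt.mul
      (continuousOn_besselJ t ht)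
  · exact mul_nonpos_of_nonpos_of_nonneg (sub_nonpos.2 hsr) (rpow_pos_of_pos ht _).le

end BesselJ

section BesselOscillation

variable {ν r : ℝ}

lemma isPerturbedOscillator_sqrt_mul_besselJ (ν : ℝ) :
    IsPerturbedOscillator (fun t ↦ (ν ^ 2 - 1 / 4) / t ^ 2) (fun t ↦ √t * besselJ ν t)
      (fun t ↦ (ν + 1 / 2) * ((√t)⁻¹ * besselJ ν t) - √t * besselJ (ν + 1) t) 0 where
  hasDerivAt t ht := by
    refine ((hasDerivAt_sqrt ht.ne').mul (hasDerivAt_besselJ ht)).congr_deriv ?_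
    obtain ⟨s, hs, rfl⟩ : ∃ s > 0, t = s ^ 2 := ⟨√t, sqrt_pos.2 ht, (sq_sqrt ht.le).symm⟩
    rw [sqrt_sq hs.le]
    field_simp
    ring
  hasDerivAt_deriv t ht := by
    refine (((((hasDerivAt_sqrt ht.ne').inv (sqrt_pos.2 ht).ne').mul
      (hasDerivAt_besselJ ht)).const_mul (ν + 1 / 2)).sub
      ((hasDerivAt_sqrt ht.ne').mul (hasDerivAt_besselJ_add_one ht))).congr_deriv ?_
    obtain ⟨s, hs, rfl⟩ : ∃ s > 0, t = s ^ 2 := ⟨√t, sqrt_pos.2 ht, (sq_sqrt ht.le).symm⟩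
    simp only [Pi.inv_apply, sqrt_sq hs.le]
    field_simp
    ring

lemma hasDerivAt_neg_abs_div {c t : ℝ} (ht : 0 < t) :
    HasDerivAt (fun t ↦ -(|c| / t)) |c / t ^ 2| t := by
  refine (((hasDerivAt_inv ht.ne').const_mul |c|).fun_neg).congr_deriv ?_
  rw [abs_div, abs_of_pos (pow_pos ht 2)]
  ring

lemma tendsto_neg_abs_div_atTop (c : ℝ) : Tendsto (fun t ↦ -(|c| / t)) atTop (𝓝 0) := by
  simpa using (tendsto_id.const_div_atTop |c|).neg

lemma isLittleO_div_sq_inv (c : ℝ) : (fun t ↦ c / t ^ 2) =o[atTop] fun t : ℝ ↦ t⁻¹ := by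
  refine (((isLittleO_one_iff ℝ).2 (tendsto_id.const_div_atTop c)).mul_isBigO
    (isBigO_refl (fun t : ℝ ↦ t⁻¹) atTop)).congr (fun t ↦ ?_) fun t ↦ one_mul _
  rw [id_eq, sq, ← div_div, ← div_eq_mul_inv]

lemma exists_sqrt_mul_besselJ_ne_zero (hν : -1 < ν) : ∃ t > 0, √t * besselJ ν t ≠ 0 :=
  (exists_besselJ_ne_zero hν).imp fun _ ⟨ht, hJ⟩ ↦ ⟨ht, mul_ne_zero (sqrt_pos.2 ht).ne' hJ⟩

lemma frequently_besselJ_neg (hν : -1 < ν) : ∃ᶠ t in atTop, besselJ ν t < 0 := by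
  obtain ⟨b, hb, hJb⟩ := exists_sqrt_mul_besselJ_ne_zero hν
  exact ((isPerturbedOscillator_sqrt_mul_besselJ ν).frequently_neg
    (fun t ht ↦ hasDerivAt_neg_abs_div ht) (tendsto_neg_abs_div_atTop _) hb hJb).mono
    fun t ht ↦ neg_of_mul_neg_right ht (sqrt_nonneg t)

lemma frequently_integral_rpow_mul_besselJ_neg (hν : -1 < ν) (hr : 1 / 2 < r)
    (hrν : -1 < r + ν) : ∃ᶠ x in atTop, ∫ t in 0..x, t ^ r * besselJ ν t < 0 := by
  obtain ⟨b, hb, hJb⟩ := exists_sqrt_mul_besselJ_ne_zero hν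
  refine (isPerturbedOscillator_sqrt_mul_besselJ ν).frequently_primitive_neg
    (fun t ht ↦ hasDerivAt_neg_abs_div ht) (tendsto_neg_abs_div_atTop _) hb hJb
    (isLittleO_div_sq_inv _) (sub_pos.2 hr) ?_
  filter_upwards [eventually_gt_atTop 0] with x hx
  have hcont : ContinuousOn (fun t ↦ t ^ r * besselJ ν t) (Ioi 0) := fun t ht ↦
    (continuousAt_rpow_const t r (.inl (ne_of_gt ht))).continuousWithinAt.mul
      (continuousOn_besselJ t ht)
  refine (hasDerivAt_integral_of_continuousOn_Ioi hcont
    (intervalIntegrable_rpow_mul_besselJ hrν hx) hx).congr_deriv ?_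
  rw [sqrt_eq_rpow, ← mul_assoc, ← rpow_add hx, sub_add_cancel]

end BesselOscillation

theorem stmt8 (α β : ℝ) (hα : -1 < α) (hβ : β < α + 1)
    (hpos : ∀ x : ℝ, 0 < x → 0 ≤ ∫ t in (0 : ℝ)..x, t ^ (-β) * besselJ α t) :
    -α - 1 < β ∧ β < α + 1 ∧ -1 / 2 ≤ β := by
  refine ⟨?_, hβ, ?_⟩ <;> by_contra! hβ'
  · obtain ⟨x, hJx, hx⟩ := ((frequently_besselJ_neg (ν := α + 1) (by linarith)).and_eventually
      (eventually_gt_atTop 0)).exists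
    have hint := integral_rpow_mul_besselJ_nonneg_of_le (s := α + 1) (by linarith) (by linarith)
      hpos hx
    rw [integral_rpow_add_one_mul_besselJ hα hx] at hint
    exact hint.not_gt (mul_neg_of_pos_of_neg (rpow_pos_of_pos hx _) hJx)
  · obtain ⟨x, hint, hx⟩ := ((frequently_integral_rpow_mul_besselJ_neg (r := -β) hα (by linarith)
      (by linarith)).and_eventually (eventually_gt_atTop 0)).exists
    exact (hpos x hx).not_gt hint
end

section
/- Let α > −1 and β be real numbers with max(−1/2, −(α+1)/3) ≤ β < α + 1. Then ∫₀ˣ t^{−β} J_α(t) dt ≥ 0 for every x > 0; moreover, the inequality is strict for every x > 0 unless (α, β) = (1/2, −1/2). -/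
open Real

/-!
Put `a = (α - β + 1) / 2`, `b = α + 1` and `y = x² / 16`. Integrating the Bessel series termwise
turns the integral into a positive multiple of `₁F₂(a; b, a + 1; -4y)`. Following Gasper, this
function is expanded in squares,
`₁F₂(a; b, a + 1; -4y) = ∑ₙ cₙ yⁿ ₀F₁(; (b + 3/2) / 2 + n; -y)²`.
Since a product of two `₀F₁` is again a hypergeometric series, comparing powers of `y` reduces the
expansion to a finite sum, which is evaluated by creative telescoping. The hypotheses on `α` and `β`
read `3a ≤ 2b` and `2a ≤ b + 1/2`, and under them the recurrence of the `cₙ`, rewritten as a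
first-order system, has nonnegative coefficients, so `cₙ ≥ 0`. Unless `(a, b) = (1, 3/2)`, even
`cₙ > 0` for `n ≥ 2`, and `₀F₁(; q; -y) > 0` once `q > y`, so the sum is then positive.
-/

open MeasureTheory (volume)
open Finset (range)
open Finset.HasAntidiagonal (antidiagonal mem_antidiagonal)
open scoped Nat

local notation "poch" q:max n:max => Polynomial.eval q (ascPochhammer _ n)

theorem ascPochhammer_eval_add {R : Type*} [CommSemiring R] (q : R) (m n : ℕ) :
    poch q (m + n) = poch q m * poch (q + m) n := by
  simp [← ascPochhammer_mul]

section Field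

variable {K : Type*} [Field K] [CharZero K]

theorem ascPochhammer_eval_two_mul (q : K) (k : ℕ) :
    poch (2 * q) (2 * k) = 4 ^ k * poch q k * poch (q + 1 / 2) k := by
  induction k with
  | zero => simp
  | succ k ih =>
    rw [show 2 * (k + 1) = 2 * k + 1 + 1 by ring]
    simp only [ascPochhammer_succ_eval, ih]
    push_cast
    ring

theorem choose_eq_ascPochhammer_div_factorial (x : K) (n : ℕ) :
    Ring.choose x n = poch (x - n + 1) n / n ! := by
  rw [Ring.choose, eq_div_iff (by exact_mod_cast n.factorial_ne_zero), mul_comm, ← nsmul_eq_mul,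
    Ring.factorial_nsmul_multichoose_eq_ascPochhammer, Polynomial.ascPochhammer_smeval_eq_eval]

theorem sum_antidiagonal_inv_ascPochhammer {p q : K} {k : ℕ} (hp : poch p k ≠ 0)
    (hq : poch q k ≠ 0) :
    ∑ x ∈ antidiagonal k, 1 / (x.1 ! * poch p x.1) * (1 / (x.2 ! * poch q x.2)) =
      poch (p + q - 1 + k) k / (k ! * poch p k * poch q k) := by
  have vandermonde := Ring.add_choose_eq k (Commute.all (q + k - 1) (p + k - 1))
  rw [choose_eq_ascPochhammer_div_factorial,
    show q + k - 1 + (p + k - 1) - k + 1 = p + q - 1 + k by ring] at vandermonde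
  rw [mul_assoc, ← div_div, vandermonde, Finset.sum_div]
  refine Finset.sum_congr rfl fun ⟨i, j⟩ hij => ?_
  obtain rfl : i + j = k := mem_antidiagonal.1 hij
  have hpij := ascPochhammer_eval_add p i j
  have hqij := ascPochhammer_eval_add q j i
  rw [add_comm j i] at hqij
  rw [hpij] at hp
  rw [hqij] at hq
  rw [choose_eq_ascPochhammer_div_factorial, choose_eq_ascPochhammer_div_factorial, hpij, hqij,
    show q + ((i + j : ℕ) : K) - 1 - i + 1 = q + j by push_cast; ring,
    show p + ((i + j : ℕ) : K) - 1 - j + 1 = p + i by push_cast; ring]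
  have := left_ne_zero_of_mul hp
  have := right_ne_zero_of_mul hp
  have := left_ne_zero_of_mul hq
  have := right_ne_zero_of_mul hq
  field_simp

end Field

section OrderedField

variable {K : Type*} [Field K] [LinearOrder K] [IsStrictOrderedRing K]

theorem ascPochhammer_eval_mono {q r : K} (hq : 0 < q) (hqr : q ≤ r) (n : ℕ) :
    poch q n ≤ poch r n := by
  induction n with
  | zero => simp
  | succ n ih =>
    have := ascPochhammer_pos n r (hq.trans_le hqr)
    simp only [ascPochhammer_succ_eval]
    gcongr

theorem pow_le_ascPochhammer_eval {q : K} (hq : 0 < q) (n : ℕ) : q ^ n ≤ poch q n := by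
  induction n with
  | zero => simp
  | succ n ih =>
    rw [pow_succ, ascPochhammer_succ_eval]
    gcongr
    · exact (ascPochhammer_pos n q hq).le
    · exact le_add_of_nonneg_right (Nat.cast_nonneg n)

end OrderedField

theorem Gamma_add_natCast {s : ℝ} (hs : ∀ n : ℕ, s ≠ -n) (n : ℕ) :
    Gamma (s + n) = Gamma s * poch s n := by
  induction n with
  | zero => simp
  | succ n ih =>
    have hsn : s + n ≠ 0 := fun h => hs n (eq_neg_of_add_eq_zero_left h)
    rw [Nat.cast_succ, ← add_assoc, Real.Gamma_add_one hsn, ih, ascPochhammer_succ_eval]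
    ring

theorem hasSum_sum_antidiagonal {A M : Type*} [AddCommMonoid A] [Finset.HasAntidiagonal A]
    [AddCommMonoid M] [TopologicalSpace M] [ContinuousAdd M] [RegularSpace M]
    {f : A × A → M} {s : M} (hf : HasSum f s) :
    HasSum (fun n => ∑ x ∈ antidiagonal n, f x) s := by
  refine (Finset.HasAntidiagonal.sigmaAntidiagonalEquivProd.hasSum_iff.2 hf).sigma fun n => ?_
  rw [← Finset.sum_coe_sort]
  exact hasSum_fintype _

/-- The confluent hypergeometric limit function `₀F₁(; q; z)`. -/
noncomputable def hyp0F1 (q z : ℝ) : ℝ :=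
  ∑' i : ℕ, z ^ i / (i ! * poch q i)

/-- The hypergeometric function `₁F₂(a; b, a + 1; z)`, with the quotient of rising factorials
`(a)ₖ / (a + 1)ₖ` written as `a / (a + k)`. -/
noncomputable def hyp1F2 (a b z : ℝ) : ℝ :=
  ∑' k : ℕ, z ^ k * (a / (k ! * poch b k * (a + k)))

/-- The coefficient of `z ^ k` in the product `₀F₁(; p; z) ₀F₁(; q; z)`. -/
noncomputable def hyp0F1MulCoeff (p q : ℝ) (k : ℕ) : ℝ :=
  poch (p + q - 1 + k) k / (k ! * poch p k * poch q k)

section Hyp0F1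

variable {p q : ℝ}

theorem summable_hyp0F1 (hq : 0 < q) (z : ℝ) : Summable fun i : ℕ => z ^ i / (i ! * poch q i) := by
  refine Summable.of_norm_bounded (Real.summable_pow_div_factorial (|z| / q)) fun i => ?_
  have hpow := pow_le_ascPochhammer_eval hq i
  have hpos := ascPochhammer_pos i q hq
  rw [Real.norm_eq_abs, abs_div, abs_pow, abs_of_pos (by positivity : 0 < i ! * poch q i), div_pow,
    div_div, mul_comm (q ^ i)]
  gcongr

theorem hyp0F1_nonneg (hq : 0 < q) {z : ℝ} (hz : 0 ≤ z) : 0 ≤ hyp0F1 q z :=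
  tsum_nonneg fun i => by
    have := ascPochhammer_pos i q hq
    positivity

theorem hyp0F1_le_hyp0F1 (hq : 0 < q) (hqp : q ≤ p) {z : ℝ} (hz : 0 ≤ z) :
    hyp0F1 p z ≤ hyp0F1 q z := by
  refine (summable_hyp0F1 (hq.trans_le hqp) z).tsum_le_tsum (fun i => ?_) (summable_hyp0F1 hq z)
  have := ascPochhammer_pos i q hq
  have := ascPochhammer_eval_mono hq hqp i
  gcongr

theorem hyp0F1_neg_pos {y : ℝ} (hy : 0 ≤ y) (hyq : y < q) : 0 < hyp0F1 q (-y) := by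
  have hq := hy.trans_lt hyq
  have antitone : Antitone fun i : ℕ => y ^ i / (i ! * poch q i) := by
    refine antitone_nat_of_succ_le fun i => ?_
    have hpos := ascPochhammer_pos i q hq
    rw [pow_succ, ascPochhammer_succ_eval, Nat.factorial_succ]
    calc y ^ i * y / (((i + 1) * i ! : ℕ) * (poch q i * (q + i)))
        = y ^ i / (i ! * poch q i) * (y / ((i + 1) * (q + i))) := by
          push_cast
          field_simp
      _ ≤ y ^ i / (i ! * poch q i) * 1 := by
          gcongr
          rw [div_le_one (by positivity)]
          nlinarith [mul_nonneg i.cast_nonneg hq.le, sq_nonneg (i : ℝ), i.cast_nonneg (α := ℝ)]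
      _ = y ^ i / (i ! * poch q i) := mul_one _
  have tendsto_partial := (summable_hyp0F1 hq (-y)).hasSum.tendsto_sum_nat
  simp only [neg_pow y, mul_div_assoc] at tendsto_partial
  have lower := antitone.alternating_series_le_tendsto tendsto_partial 1
  have : y / q < 1 := (div_lt_one hq).2 hyq
  simp only [mul_one, Finset.sum_range_succ, Finset.range_zero, Finset.sum_empty,
    ascPochhammer_zero, ascPochhammer_one, Polynomial.eval_one, Polynomial.eval_X] at lower
  norm_num at lower
  rw [hyp0F1]
  simp only [neg_pow y, mul_div_assoc]
  linarith

theorem hasSum_hyp0F1_mul (hp : 0 < p) (hq : 0 < q) (z : ℝ) :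
    HasSum (fun k => z ^ k * hyp0F1MulCoeff p q k) (hyp0F1 p z * hyp0F1 q z) := by
  have cauchyProduct (k : ℕ) : ∑ x ∈ antidiagonal k,
      z ^ x.1 / (x.1 ! * poch p x.1) * (z ^ x.2 / (x.2 ! * poch q x.2)) =
        z ^ k * hyp0F1MulCoeff p q k := by
    rw [hyp0F1MulCoeff, ← sum_antidiagonal_inv_ascPochhammer (ascPochhammer_pos k p hp).ne'
      (ascPochhammer_pos k q hq).ne', Finset.mul_sum]
    refine Finset.sum_congr rfl fun x hx => ?_
    rw [← mem_antidiagonal.1 hx, pow_add]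
    ring
  have hsp := (summable_hyp0F1 hp z).norm
  have hsq := (summable_hyp0F1 hq z).norm
  simp only [hyp0F1, ← cauchyProduct]
  rw [tsum_mul_tsum_eq_tsum_sum_antidiagonal_of_summable_norm hsp hsq]
  exact (summable_norm_sum_mul_antidiagonal_of_summable_norm hsp hsq).of_norm.hasSum

theorem hyp0F1MulCoeff_nonneg (hp : 0 < p) (hq : 0 < q) (hpq : 1 < p + q) (k : ℕ) :
    0 ≤ hyp0F1MulCoeff p q k := by
  have := ascPochhammer_pos k p hp
  have := ascPochhammer_pos k q hq
  have := ascPochhammer_pos k (p + q - 1 + k) (by linarith [k.cast_nonneg (α := ℝ)])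
  unfold hyp0F1MulCoeff
  positivity

theorem summable_mul_hyp0F1MulCoeff_shift {c : ℕ → ℝ} (hc : Summable c) (hq : 1 / 2 < q) (z : ℝ) :
    Summable fun x : ℕ × ℕ => c x.1 * (z ^ x.2 * hyp0F1MulCoeff (q + x.1) (q + x.1) x.2) := by
  have hqn (n : ℕ) : 1 / 2 < q + n := by linarith [n.cast_nonneg (α := ℝ)]
  have norm_eq (x : ℕ × ℕ) : ‖c x.1 * (z ^ x.2 * hyp0F1MulCoeff (q + x.1) (q + x.1) x.2)‖ =
      |c x.1| * (|z| ^ x.2 * hyp0F1MulCoeff (q + x.1) (q + x.1) x.2) := by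
    have := hqn x.1
    rw [norm_mul, norm_mul, norm_pow, Real.norm_of_nonneg
      (hyp0F1MulCoeff_nonneg (by linarith) (by linarith) (by linarith) x.2)]
    simp only [Real.norm_eq_abs]
  have hasSum_row (n : ℕ) :
      HasSum (fun j => |c n| * (|z| ^ j * hyp0F1MulCoeff (q + n) (q + n) j))
        (|c n| * (hyp0F1 (q + n) |z| * hyp0F1 (q + n) |z|)) := by
    have := hqn n
    exact (hasSum_hyp0F1_mul (by linarith) (by linarith) |z|).mul_left _
  refine Summable.of_norm ?_
  simp only [norm_eq]
  rw [summable_prod_of_nonneg fun x => by rw [← norm_eq]; exact norm_nonneg _]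
  refine ⟨fun n => (hasSum_row n).summable, ?_⟩
  simp only [fun n => (hasSum_row n).tsum_eq]
  refine Summable.of_nonneg_of_le (fun n => ?_) (fun n => ?_)
    (hc.abs.mul_right (hyp0F1 q |z| * hyp0F1 q |z|))
  · have := mul_self_nonneg (hyp0F1 (q + n) |z|)
    positivity
  · have := hqn n
    have := hyp0F1_nonneg (q := q) (by linarith) (abs_nonneg z)
    have := hyp0F1_nonneg (q := q + n) (by linarith) (abs_nonneg z)
    have := hyp0F1_le_hyp0F1 (q := q) (p := q + n) (by linarith) (by simp) (abs_nonneg z)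
    gcongr

theorem hasSum_mul_hyp0F1_sq {c : ℕ → ℝ} (hc : Summable c) (hq : 1 / 2 < q) (z : ℝ) :
    HasSum (fun n : ℕ => c n * hyp0F1 (q + n) z ^ 2)
      (∑' k : ℕ, ∑ x ∈ antidiagonal k,
        c x.1 * (z ^ x.2 * hyp0F1MulCoeff (q + x.1) (q + x.1) x.2)) := by
  have hf := (summable_mul_hyp0F1MulCoeff_shift hc hq z).hasSum
  rw [(hasSum_sum_antidiagonal hf).tsum_eq]
  refine hf.prod_fiberwise fun n => ?_
  have hqn : 0 < q + n := by linarith [n.cast_nonneg (α := ℝ)]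
  rw [sq]
  exact (hasSum_hyp0F1_mul hqn hqn z).mul_left _

end Hyp0F1

section GasperCoeff

/-- The coefficients `rₙ` of Gasper's expansion of `₁F₂(a; b, a + 1; ·)` in squares of `₀F₁`,
normalized to `r₀ = 1` and without the factors that are positive for all parameters (these are
restored in `gasperSqCoeff`). They solve the three-term recurrence that the Bailey-type inversion
`sum_wellPoisedFactor_mul_gasperCoeff` forces. -/
noncomputable def gasperCoeff (a b : ℝ) : ℕ → ℝ
  | 0 => 1
  | 1 => (b - 3 * a / 2) / (b * (a + 1))
  | n + 2 =>
    (((n + b + 1) * (n + a + 2) * (n + b + 1 / 2) + (n + 1) * (n + 1 / 2) * (n + b - a - 1 / 2)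
        - a * (b + 3 / 2) * (2 * n + b + 3 / 2)) * gasperCoeff a b (n + 1)
      - (n + 1) * (n + 1 / 2) * (n + b - a - 1 / 2) * gasperCoeff a b n) /
      ((n + b + 1) * (n + a + 2) * (n + b + 1 / 2))

/-- The failure of `gasperCoeff` to satisfy the two-term recurrence that holds on the boundary line
`2 * a = b + 1 / 2`. Unlike the three-term recurrence, the joint recurrence of the coefficients and
of this defect has nonnegative coefficients. -/
noncomputable def gasperDefect (a b : ℝ) (n : ℕ) : ℝ :=
  gasperCoeff a b (n + 1) -
    (n + 1 / 2) * (n + b - a - 1 / 2) / ((n + b) * (n + a + 1)) * gasperCoeff a b n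

variable {a b : ℝ}

theorem gasperCoeff_add_two (ha : 0 < a) (hb : 0 < b) (n : ℕ) :
    (n + b + 1) * (n + a + 2) * (n + b + 1 / 2) * gasperCoeff a b (n + 2) =
      ((n + b + 1) * (n + a + 2) * (n + b + 1 / 2) + (n + 1) * (n + 1 / 2) * (n + b - a - 1 / 2)
        - a * (b + 3 / 2) * (2 * n + b + 3 / 2)) * gasperCoeff a b (n + 1)
      - (n + 1) * (n + 1 / 2) * (n + b - a - 1 / 2) * gasperCoeff a b n := by
  rw [gasperCoeff, mul_div_cancel₀]
  positivity

theorem gasperCoeff_add_one (a b : ℝ) (n : ℕ) :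
    gasperCoeff a b (n + 1) =
      (n + 1 / 2) * (n + b - a - 1 / 2) / ((n + b) * (n + a + 1)) * gasperCoeff a b n +
        gasperDefect a b n := by
  rw [gasperDefect, add_sub_cancel]

theorem gasperDefect_zero (ha : 0 < a) (hb : 0 < b) :
    gasperDefect a b 0 = (b / 2 - a + 1 / 4) / (b * (a + 1)) := by
  simp only [gasperDefect, gasperCoeff]
  push_cast
  field_simp
  ring

theorem gasperDefect_add_one (ha : 0 < a) (hb : 0 < b) (n : ℕ) :
    gasperDefect a b (n + 1) =
      ((b + 1 / 2 - 2 * a) * (n + b / 2 + 3 / 4) * gasperCoeff a b (n + 1) +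
        (n + 1) * (n + b) * (n + a + 1) * gasperDefect a b n) /
        ((n + b + 1) * (n + a + 2) * (n + b + 1 / 2)) := by
  rw [eq_div_iff (by positivity), gasperDefect, gasperDefect]
  have recurrence := gasperCoeff_add_two ha hb n
  have : (n + b + 1 : ℝ) ≠ 0 := by positivity
  have : (n + a + 2 : ℝ) ≠ 0 := by positivity
  have : (n + b : ℝ) ≠ 0 := by positivity
  have : (n + a + 1 : ℝ) ≠ 0 := by positivity
  have cancel_succ : ((n + 1 : ℕ) + 1 / 2) * ((n + 1 : ℕ) + b - a - 1 / 2) /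
      (((n + 1 : ℕ) + b) * ((n + 1 : ℕ) + a + 1)) *
        ((n + b + 1) * (n + a + 2) * (n + b + 1 / 2)) =
      (n + 3 / 2) * (n + b - a + 1 / 2) * (n + b + 1 / 2) := by
    have : (n + 1 + b : ℝ) ≠ 0 := by positivity
    have : (n + 1 + a + 1 : ℝ) ≠ 0 := by positivity
    push_cast
    field_simp
    ring
  have cancel : (n + 1) * (n + b) * (n + a + 1) *
      ((n + 1 / 2) * (n + b - a - 1 / 2) / ((n + b) * (n + a + 1))) =
      (n + 1) * (n + 1 / 2) * (n + b - a - 1 / 2) := by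
    field_simp
  linear_combination recurrence - gasperCoeff a b (n + 1) * cancel_succ + gasperCoeff a b n * cancel

theorem gasperCoeff_nonneg_and_gasperDefect_nonneg (ha : 0 < a) (hab : 3 * a ≤ 2 * b)
    (hab' : 2 * a ≤ b + 1 / 2) (n : ℕ) :
    0 ≤ gasperCoeff a b n ∧ 0 ≤ gasperCoeff a b (n + 1) ∧ 0 ≤ gasperDefect a b n := by
  have hb : 0 < b := by linarith
  have : 0 ≤ b + 1 / 2 - 2 * a := by linarith
  induction n with
  | zero =>
    refine ⟨zero_le_one, div_nonneg (by linarith) (by positivity), ?_⟩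
    rw [gasperDefect_zero ha hb]
    exact div_nonneg (by linarith) (by positivity)
  | succ n ih =>
    obtain ⟨-, hcoeff, hdefect⟩ := ih
    have hdefect_succ : 0 ≤ gasperDefect a b (n + 1) := by
      rw [gasperDefect_add_one ha hb]
      positivity
    refine ⟨hcoeff, ?_, hdefect_succ⟩
    rw [gasperCoeff_add_one]
    have : 0 ≤ ((n + 1 : ℕ) : ℝ) + b - a - 1 / 2 := by
      push_cast
      linarith [n.cast_nonneg (α := ℝ)]
    positivity

theorem gasperCoeff_nonneg (ha : 0 < a) (hab : 3 * a ≤ 2 * b) (hab' : 2 * a ≤ b + 1 / 2) (n : ℕ) :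
    0 ≤ gasperCoeff a b n :=
  (gasperCoeff_nonneg_and_gasperDefect_nonneg ha hab hab' n).1

theorem gasperDefect_nonneg (ha : 0 < a) (hab : 3 * a ≤ 2 * b) (hab' : 2 * a ≤ b + 1 / 2) (n : ℕ) :
    0 ≤ gasperDefect a b n :=
  (gasperCoeff_nonneg_and_gasperDefect_nonneg ha hab hab' n).2.2

theorem gasperDefect_pos (ha : 0 < a) (hab : 3 * a ≤ 2 * b) (hab' : 2 * a < b + 1 / 2) (n : ℕ) :
    0 < gasperDefect a b n := by
  have hb : 0 < b := by linarith
  have : 0 < b + 1 / 2 - 2 * a := by linarith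
  induction n with
  | zero =>
    rw [gasperDefect_zero ha hb]
    exact div_pos (by linarith) (by positivity)
  | succ n ih =>
    have := gasperCoeff_nonneg ha hab hab'.le (n + 1)
    rw [gasperDefect_add_one ha hb]
    positivity

theorem gasperCoeff_add_one_pos (ha : 0 < a) (hab : 3 * a < 2 * b) (hab' : 2 * a ≤ b + 1 / 2)
    (n : ℕ) : 0 < gasperCoeff a b (n + 1) := by
  have hb : 0 < b := by linarith
  induction n with
  | zero => exact div_pos (by linarith) (by positivity)
  | succ n ih =>
    have := gasperDefect_nonneg ha hab.le hab' (n + 1)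
    have : 0 < ((n + 1 : ℕ) : ℝ) + b - a - 1 / 2 := by
      push_cast
      linarith [n.cast_nonneg (α := ℝ)]
    rw [gasperCoeff_add_one]
    positivity

theorem gasperCoeff_add_two_pos (ha : 0 < a) (hab : 3 * a ≤ 2 * b) (hab' : 2 * a ≤ b + 1 / 2)
    (hne : (a, b) ≠ (1, 3 / 2)) (n : ℕ) : 0 < gasperCoeff a b (n + 2) := by
  rcases hab.lt_or_eq with hlt | heq
  · exact gasperCoeff_add_one_pos ha hlt hab' (n + 1)
  have hlt' : 2 * a < b + 1 / 2 :=
    hab'.lt_of_ne fun h => hne (Prod.ext (by linarith) (by linarith))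
  have := gasperCoeff_nonneg ha hab hab' (n + 1)
  have := gasperDefect_pos ha hab hlt' (n + 1)
  have hb : 0 < b := by linarith
  have : 0 ≤ ((n + 1 : ℕ) : ℝ) + b - a - 1 / 2 := by
    push_cast
    linarith [n.cast_nonneg (α := ℝ)]
  rw [gasperCoeff_add_one]
  positivity

theorem gasperCoeff_add_two_le (ha : 0 < a) (hab : 3 * a ≤ 2 * b) (hab' : 2 * a ≤ b + 1 / 2)
    {n : ℕ} (hn : 1 ≤ n) : gasperCoeff a b (n + 2) ≤ 2 * gasperCoeff a b (n + 1) := by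
  have hb : 0 < b := by linarith
  have hn' : (1 : ℝ) ≤ n := by exact_mod_cast hn
  have hr := gasperCoeff_nonneg ha hab hab'
  set A : ℝ := (n + b + 1) * (n + a + 2) * (n + b + 1 / 2)
  set B : ℝ := (n + 1) * (n + 1 / 2) * (n + b - a - 1 / 2)
  have hA : 0 < A := by positivity
  have hB : 0 ≤ B := mul_nonneg (by positivity) (by linarith)
  have hBA : B ≤ A := by
    have h₁ : (n + 1 : ℝ) * (n + 1 / 2) ≤ (n + b + 1) * (n + a + 2) := by gcongr <;> linarith
    have h₂ : n + b - a - 1 / 2 ≤ n + b + 1 / 2 := by linarith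
    exact mul_le_mul h₁ h₂ (by linarith) (by positivity)
  refine le_of_mul_le_mul_left ?_ hA
  calc A * gasperCoeff a b (n + 2)
      = (A + B - a * (b + 3 / 2) * (2 * n + b + 3 / 2)) * gasperCoeff a b (n + 1)
          - B * gasperCoeff a b n := gasperCoeff_add_two ha hb n
    _ ≤ (A + B) * gasperCoeff a b (n + 1) :=
        (sub_le_self _ (mul_nonneg hB (hr n))).trans
          (mul_le_mul_of_nonneg_right (sub_le_self _ (by positivity)) (hr (n + 1)))
    _ ≤ (A + A) * gasperCoeff a b (n + 1) := by gcongr; exact hr (n + 1)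
    _ = A * (2 * gasperCoeff a b (n + 1)) := by ring

end GasperCoeff

/-- The very-well-poised factor `(μ)ₙ (1 + μ / 2)ₙ / ((μ / 2)ₙ n!)` with `μ = p - 1`, multiplied
out so that it makes sense at `p = 1`. -/
noncomputable def wellPoisedFactor (p : ℝ) : ℕ → ℝ
  | 0 => 1
  | n + 1 => (2 * n + 1 + p) * poch p n / (n + 1)!

/-- The kernel `1 / ((k - n)! (p)ₖ₊ₙ)` of the Bailey transform, extended by zero to `k < n`. -/
noncomputable def baileyKernel (p : ℝ) (n k : ℕ) : ℝ :=
  if n ≤ k then 1 / ((k - n)! * poch p (k + n)) else 0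

section BaileySum

variable {p : ℝ}

theorem wellPoisedFactor_pos (hp : 0 < p) (n : ℕ) : 0 < wellPoisedFactor p n := by
  cases n with
  | zero => exact zero_lt_one
  | succ n =>
    have := ascPochhammer_pos n p hp
    simp only [wellPoisedFactor]
    positivity

theorem wellPoisedFactor_add_two_le (hp : 0 < p) (n : ℕ) :
    wellPoisedFactor p (n + 2) ≤ 3 * (p + 1) * wellPoisedFactor p (n + 1) := by
  have := ascPochhammer_pos n p hp
  have h₁ : 2 * ((n + 1 : ℕ) : ℝ) + 1 + p ≤ 3 * (2 * n + 1 + p) := by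
    push_cast
    linarith [n.cast_nonneg (α := ℝ)]
  have h₂ : (p + n) / (n + 2) ≤ p + 1 := by
    rw [div_le_iff₀ (by positivity)]
    nlinarith [n.cast_nonneg (α := ℝ)]
  calc wellPoisedFactor p (n + 2)
      = (2 * (n + 1 : ℕ) + 1 + p) * (poch p n / (n + 1)!) * ((p + n) / (n + 2)) := by
        rw [wellPoisedFactor, ascPochhammer_succ_eval, Nat.factorial_succ (n + 1)]
        push_cast
        field_simp
        ring
    _ ≤ 3 * (2 * n + 1 + p) * (poch p n / (n + 1)!) * (p + 1) := by gcongr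
    _ = 3 * (p + 1) * wellPoisedFactor p (n + 1) := by
        rw [wellPoisedFactor]
        ring

theorem baileyKernel_of_lt (p : ℝ) {n k : ℕ} (h : k < n) : baileyKernel p n k = 0 :=
  if_neg h.not_ge

theorem baileyKernel_add (p : ℝ) (n j : ℕ) :
    baileyKernel p n (n + j) = 1 / (j ! * poch p (2 * n + j)) := by
  rw [baileyKernel, if_pos (Nat.le_add_right n j), Nat.add_sub_cancel_left,
    show n + j + n = 2 * n + j by ring]

theorem baileyKernel_eq_mul_succ_right (hp : 0 < p) (n k : ℕ) :
    baileyKernel p n k = (k + 1 - n) * (p + k + n) * baileyKernel p n (k + 1) := by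
  rcases le_or_gt n k with hnk | hkn
  · obtain ⟨j, rfl⟩ := Nat.exists_eq_add_of_le hnk
    have := ascPochhammer_pos (2 * n + j) p hp
    rw [baileyKernel_add, add_assoc n j 1, baileyKernel_add, ← add_assoc, ascPochhammer_succ_eval,
      Nat.factorial_succ]
    push_cast
    have : p + (2 * n + j) ≠ 0 := by positivity
    field_simp
    ring
  · rw [baileyKernel_of_lt p hkn]
    rcases (Nat.succ_le_of_lt hkn).eq_or_lt with rfl | hkn'
    · simp
    · rw [baileyKernel_of_lt p hkn', mul_zero]

theorem mul_baileyKernel_succ_left (hp : 0 < p) (n k : ℕ) :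
    (p + k + n) * baileyKernel p (n + 1) k = (k - n) * baileyKernel p n k := by
  rcases lt_trichotomy n k with hnk | rfl | hkn
  · obtain ⟨j, rfl⟩ := Nat.exists_eq_add_of_lt hnk
    have := ascPochhammer_pos (2 * n + j + 1) p hp
    have hsucc : baileyKernel p (n + 1) (n + j + 1) = 1 / (j ! * poch p (2 * n + j + 1 + 1)) := by
      rw [show n + j + 1 = n + 1 + j by ring, baileyKernel_add]
      ring_nf
    rw [hsucc, add_assoc n j 1, baileyKernel_add, ← add_assoc (2 * n),
      ascPochhammer_succ_eval (2 * n + j + 1), Nat.factorial_succ]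
    push_cast
    have : p + (2 * n + j + 1) ≠ 0 := by positivity
    field_simp
    ring
  · rw [baileyKernel_of_lt p (Nat.lt_succ_self n), sub_self, mul_zero, zero_mul]
  · rw [baileyKernel_of_lt p hkn, baileyKernel_of_lt p (by lia), mul_zero, mul_zero]

theorem baileyKernel_eq_mul_succ_succ (hp : 0 < p) (n k : ℕ) :
    baileyKernel p n k =
      (p + k + n) * (p + k + n + 1) * baileyKernel p (n + 1) (k + 1) := by
  have hleft := mul_baileyKernel_succ_left hp n (k + 1)
  push_cast at hleft
  linear_combination baileyKernel_eq_mul_succ_right hp n k - (p + k + n) * hleft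

theorem baileyKernel_add_two_left (hp : 0 < p) (n k : ℕ) :
    baileyKernel p (n + 2) k = (k - n - 1) * (k - n) * baileyKernel p (n + 1) (k + 1) := by
  have hleft := mul_baileyKernel_succ_left hp (n + 1) k
  have hright := baileyKernel_eq_mul_succ_right hp (n + 1) k
  push_cast at hleft hright
  have : p + k + n + 1 ≠ 0 := by positivity
  refine mul_left_cancel₀ this ?_
  linear_combination hleft + (k - n - 1) * hright

end BaileySum

section GasperSum

variable {a b : ℝ}

/-- The `n`-th summand that the `k`-recurrence of `sum_wellPoisedFactor_mul_gasperCoeff` has to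
annihilate. -/
noncomputable def gasperSummand (a b : ℝ) (k n : ℕ) : ℝ :=
  (-1) ^ n * wellPoisedFactor (b + 1 / 2) n * gasperCoeff a b n *
    ((2 * k + b + 3 / 2) * (k + a) * baileyKernel (b + 1 / 2) n k -
      (2 * k + b + 1 / 2) * (k + b) * (k + a + 1) * (k + 1) * baileyKernel (b + 1 / 2) n (k + 1))

/-- The Zeilberger certificate of `gasperSummand`: its partial sums in closed form. -/
noncomputable def gasperCertificate (a b : ℝ) (k n : ℕ) : ℝ :=
  (-1) ^ (n + 1) * (poch (b + 1 / 2) n / n !) *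
    ((n + 1 / 2) * (n + b - a - 1 / 2) * baileyKernel (b + 1 / 2) (n + 1) k * gasperCoeff a b n +
      (n + b) * (n + a + 1) * baileyKernel (b + 1 / 2) n k * gasperCoeff a b (n + 1))

theorem gasperSummand_zero (ha : 0 < a) (hb : 0 < b) (k : ℕ) :
    gasperSummand a b k 0 = gasperCertificate a b k 0 := by
  have hp : 0 < b + 1 / 2 := by linarith
  have hright := baileyKernel_eq_mul_succ_right hp 0 k
  have hleft : baileyKernel (b + 1 / 2) 1 k = k * (k + 1) * baileyKernel (b + 1 / 2) 0 (k + 1) := by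
    have : b + 1 / 2 + k ≠ 0 := by positivity
    refine mul_left_cancel₀ this ?_
    have := mul_baileyKernel_succ_left hp 0 k
    push_cast at this hright
    linear_combination this + k * hright
  have hone : b * (a + 1) * gasperCoeff a b 1 = b - 3 * a / 2 := by
    rw [gasperCoeff]
    field_simp
  simp only [gasperSummand, gasperCertificate, wellPoisedFactor, zero_add, hleft, hright,
    Nat.factorial_zero, ascPochhammer_zero, Polynomial.eval_one]
  rw [show gasperCoeff a b 0 = 1 from rfl]
  push_cast
  linear_combination ((k + 1) * (b + 1 / 2 + k) * baileyKernel (b + 1 / 2) 0 (k + 1)) * hone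

theorem gasperCertificate_add_gasperSummand (ha : 0 < a) (hb : 0 < b) (k n : ℕ) :
    gasperCertificate a b k n + gasperSummand a b k (n + 1) = gasperCertificate a b k (n + 1) := by
  have hp : 0 < b + 1 / 2 := by linarith
  have hfac : poch (b + 1 / 2) n / n ! = (n + 1) * (poch (b + 1 / 2) n / (n + 1)!) := by
    rw [Nat.factorial_succ]
    push_cast
    field_simp
  have hfac_succ : poch (b + 1 / 2) (n + 1) / (n + 1)! =
      (b + 1 / 2 + n) * (poch (b + 1 / 2) n / (n + 1)!) := by
    rw [ascPochhammer_succ_eval]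
    ring
  simp only [gasperCertificate, gasperSummand, wellPoisedFactor, hfac, hfac_succ,
    baileyKernel_eq_mul_succ_succ hp n k, baileyKernel_eq_mul_succ_right hp (n + 1) k,
    show n + 1 + 1 = n + 2 from rfl, baileyKernel_add_two_left hp n k, mul_div_assoc]
  push_cast
  linear_combination (-(-1) ^ n * (poch (b + 1 / 2) n / (n + 1)!) * (k - n) *
    (b + 1 / 2 + k + n + 1) * baileyKernel (b + 1 / 2) (n + 1) (k + 1)) *
      gasperCoeff_add_two ha hb n

theorem sum_range_gasperSummand (ha : 0 < a) (hb : 0 < b) (k n : ℕ) :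
    ∑ i ∈ range (n + 1), gasperSummand a b k i = gasperCertificate a b k n := by
  induction n with
  | zero => rw [Finset.sum_range_one, gasperSummand_zero ha hb]
  | succ n ih => rw [Finset.sum_range_succ, ih, gasperCertificate_add_gasperSummand ha hb]

theorem sum_wellPoisedFactor_mul_gasperCoeff (ha : 0 < a) (hb : 0 < b) (k : ℕ) :
    ∑ n ∈ range (k + 1), (-1) ^ n * wellPoisedFactor (b + 1 / 2) n * gasperCoeff a b n *
        baileyKernel (b + 1 / 2) n k =
      a * poch ((b + 3 / 2) / 2) k /
        (poch ((b + 1 / 2) / 2) k * k ! * poch b k * (a + k)) := by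
  induction k with
  | zero => simp [wellPoisedFactor, baileyKernel, gasperCoeff, ha.ne']
  | succ k ih =>
    have hzero : ∑ n ∈ range (k + 2), gasperSummand a b k n = 0 := by
      rw [sum_range_gasperSummand ha hb, gasperCertificate, baileyKernel_of_lt _ (by lia),
        baileyKernel_of_lt _ (by lia)]
      ring
    have hsplit (n : ℕ) : gasperSummand a b k n =
        (2 * k + b + 3 / 2) * (k + a) * ((-1) ^ n * wellPoisedFactor (b + 1 / 2) n *
            gasperCoeff a b n * baileyKernel (b + 1 / 2) n k) -
          (2 * k + b + 1 / 2) * (k + b) * (k + a + 1) * (k + 1) * ((-1) ^ n *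
            wellPoisedFactor (b + 1 / 2) n * gasperCoeff a b n *
              baileyKernel (b + 1 / 2) n (k + 1)) := by
      rw [gasperSummand]
      ring
    simp only [hsplit, Finset.sum_sub_distrib, ← Finset.mul_sum] at hzero
    rw [Finset.sum_range_succ _ (k + 1), baileyKernel_of_lt _ k.lt_succ_self, mul_zero, add_zero,
      ih] at hzero
    have : (2 * k + b + 1 / 2) * (k + b) * (k + a + 1) * (k + 1) ≠ 0 := by positivity
    refine mul_left_cancel₀ this ((sub_eq_zero.1 hzero).symm.trans ?_)
    have := ascPochhammer_pos k ((b + 1 / 2) / 2) (by positivity)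
    have := ascPochhammer_pos k b hb
    have : (b + 1 / 2) / 2 + k ≠ 0 := by positivity
    have : b + k ≠ 0 := by positivity
    have : a + k ≠ 0 := by positivity
    have : a + (k + 1) ≠ 0 := by positivity
    simp only [ascPochhammer_succ_eval, Nat.factorial_succ]
    push_cast
    field_simp
    ring

end GasperSum

section Expansion

variable {a b : ℝ}

/-- The coefficients of the expansion of `₁F₂(a; b, a + 1; -4y)` in the functions
`yⁿ ₀F₁(; (b + 3 / 2) / 2 + n; -y)²`. -/
noncomputable def gasperSqCoeff (a b : ℝ) (n : ℕ) : ℝ :=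
  wellPoisedFactor (b + 1 / 2) n * gasperCoeff a b n / poch ((b + 3 / 2) / 2) n ^ 2

theorem gasperSqCoeff_nonneg (ha : 0 < a) (hab : 3 * a ≤ 2 * b) (hab' : 2 * a ≤ b + 1 / 2) (n : ℕ) :
    0 ≤ gasperSqCoeff a b n := by
  have := wellPoisedFactor_pos (p := b + 1 / 2) (by linarith) n
  have := gasperCoeff_nonneg ha hab hab' n
  unfold gasperSqCoeff
  positivity

theorem gasperSqCoeff_add_two_pos (ha : 0 < a) (hab : 3 * a ≤ 2 * b) (hab' : 2 * a ≤ b + 1 / 2)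
    (hne : (a, b) ≠ (1, 3 / 2)) (n : ℕ) : 0 < gasperSqCoeff a b (n + 2) := by
  have := wellPoisedFactor_pos (p := b + 1 / 2) (by linarith) (n + 2)
  have := gasperCoeff_add_two_pos ha hab hab' hne n
  have := ascPochhammer_pos (n + 2) ((b + 3 / 2) / 2) (by linarith)
  unfold gasperSqCoeff
  positivity

theorem gasperSqCoeff_add_two_le (ha : 0 < a) (hab : 3 * a ≤ 2 * b) (hab' : 2 * a ≤ b + 1 / 2)
    {n : ℕ} (hn : 1 ≤ n) :
    gasperSqCoeff a b (n + 2) * (n + 1) ^ 2 ≤ 6 * (b + 3 / 2) * gasperSqCoeff a b (n + 1) := by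
  have hb : 0 < b := by linarith
  have hr := gasperCoeff_nonneg ha hab hab'
  have hW := wellPoisedFactor_pos (p := b + 1 / 2) (by linarith)
  have hpoch := ascPochhammer_pos (n + 1) ((b + 3 / 2) / 2) (by linarith)
  have hcancel : (n + 1 : ℝ) ^ 2 / ((b + 3 / 2) / 2 + (n + 1 : ℕ)) ^ 2 ≤ 1 := by
    rw [div_le_one (by positivity)]
    have : (n + 1 : ℝ) ≤ (b + 3 / 2) / 2 + (n + 1 : ℕ) := by
      push_cast
      linarith
    gcongr
  calc gasperSqCoeff a b (n + 2) * (n + 1) ^ 2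
      = wellPoisedFactor (b + 1 / 2) (n + 2) * gasperCoeff a b (n + 2) /
          poch ((b + 3 / 2) / 2) (n + 1) ^ 2 *
            ((n + 1) ^ 2 / ((b + 3 / 2) / 2 + (n + 1 : ℕ)) ^ 2) := by
        rw [gasperSqCoeff, ascPochhammer_succ_eval (n + 1)]
        field_simp
    _ ≤ wellPoisedFactor (b + 1 / 2) (n + 2) * gasperCoeff a b (n + 2) /
          poch ((b + 3 / 2) / 2) (n + 1) ^ 2 := by
        have := hr (n + 2)
        have := hW (n + 2)
        exact mul_le_of_le_one_right (by positivity) hcancel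
    _ ≤ 3 * (b + 1 / 2 + 1) * wellPoisedFactor (b + 1 / 2) (n + 1) *
          (2 * gasperCoeff a b (n + 1)) / poch ((b + 3 / 2) / 2) (n + 1) ^ 2 := by
        have := hr (n + 2)
        have := hW (n + 1)
        have := wellPoisedFactor_add_two_le (p := b + 1 / 2) (by linarith) n
        have := gasperCoeff_add_two_le ha hab hab' hn
        gcongr
    _ = 6 * (b + 3 / 2) * gasperSqCoeff a b (n + 1) := by
        rw [gasperSqCoeff]
        ring

theorem summable_gasperSqCoeff_mul_pow (ha : 0 < a) (hab : 3 * a ≤ 2 * b)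
    (hab' : 2 * a ≤ b + 1 / 2) (y : ℝ) : Summable fun n => gasperSqCoeff a b n * y ^ n := by
  have hc := gasperSqCoeff_nonneg ha hab hab'
  refine (summable_nat_add_iff 1).1
    (summable_of_ratio_norm_eventually_le (r := 1 / 2) (by norm_num) ?_)
  obtain ⟨N, hN⟩ := exists_nat_ge (12 * (b + 3 / 2) * |y|)
  filter_upwards [Filter.eventually_ge_atTop (max 1 N)] with n hn
  have hNn : (N : ℝ) ≤ n := by exact_mod_cast (le_max_right 1 N).trans hn
  have hy : 12 * (b + 3 / 2) * |y| ≤ (n + 1) ^ 2 := by nlinarith [n.cast_nonneg (α := ℝ)]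
  have hratio := gasperSqCoeff_add_two_le ha hab hab' ((le_max_left 1 N).trans hn)
  have hn₀ : 0 < (n + 1 : ℝ) ^ 2 := by positivity
  simp only [norm_mul, norm_pow, Real.norm_of_nonneg (hc _), Real.norm_eq_abs]
  refine le_of_mul_le_mul_left ?_ hn₀
  have := hc (n + 1)
  calc (n + 1 : ℝ) ^ 2 * (gasperSqCoeff a b (n + 2) * |y| ^ (n + 2))
      = gasperSqCoeff a b (n + 2) * (n + 1) ^ 2 * (|y| ^ (n + 1) * |y|) := by ring
    _ ≤ 6 * (b + 3 / 2) * gasperSqCoeff a b (n + 1) * (|y| ^ (n + 1) * |y|) := by gcongr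
    _ = 12 * (b + 3 / 2) * |y| * (1 / 2 * (gasperSqCoeff a b (n + 1) * |y| ^ (n + 1))) := by ring
    _ ≤ (n + 1) ^ 2 * (1 / 2 * (gasperSqCoeff a b (n + 1) * |y| ^ (n + 1))) := by gcongr

theorem hyp0F1MulCoeff_add_self {q : ℝ} (hq : 1 / 2 < q) (n j : ℕ) :
    hyp0F1MulCoeff (q + n) (q + n) j =
      poch q n ^ 2 * (poch (2 * q - 1) (2 * (n + j)) / poch q (n + j) ^ 2) *
        baileyKernel (2 * q - 1) n (n + j) := by
  have := ascPochhammer_pos (2 * n + j) (2 * q - 1) (by linarith)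
  have := ascPochhammer_pos n q (by linarith)
  have := ascPochhammer_pos j (q + n) (by positivity)
  rw [baileyKernel_add, show 2 * (n + j) = 2 * n + j + j by ring, ascPochhammer_eval_add,
    ascPochhammer_eval_add q n j, hyp0F1MulCoeff,
    show q + n + (q + n) - 1 + j = 2 * q - 1 + (2 * n + j : ℕ) by push_cast; ring]
  field_simp

theorem sum_gasperSqCoeff_mul_hyp0F1MulCoeff (ha : 0 < a) (hb : 0 < b) (k : ℕ) :
    ∑ x ∈ antidiagonal k, gasperSqCoeff a b x.1 * ((-1) ^ x.2 *
        hyp0F1MulCoeff ((b + 3 / 2) / 2 + x.1) ((b + 3 / 2) / 2 + x.1) x.2) =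
      (-4) ^ k * (a / (k ! * poch b k * (a + k))) := by
  set q : ℝ := (b + 3 / 2) / 2 with hqb
  have hp : b + 1 / 2 = 2 * q - 1 := by rw [hqb]; ring
  have hsummand : ∀ x ∈ antidiagonal k, gasperSqCoeff a b x.1 * ((-1) ^ x.2 *
      hyp0F1MulCoeff (q + x.1) (q + x.1) x.2) =
        (-1) ^ k * (poch (b + 1 / 2) (2 * k) / poch q k ^ 2) * ((-1) ^ x.1 *
          wellPoisedFactor (b + 1 / 2) x.1 * gasperCoeff a b x.1 *
            baileyKernel (b + 1 / 2) x.1 k) := by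
    rintro ⟨n, j⟩ hnj
    obtain rfl : n + j = k := mem_antidiagonal.1 hnj
    have := ascPochhammer_pos n q (by positivity)
    have hsign : (-1 : ℝ) ^ j = (-1) ^ (n + j) * (-1) ^ n := by
      rw [pow_add, mul_right_comm, ← mul_pow]
      simp
    rw [gasperSqCoeff, hyp0F1MulCoeff_add_self (by linarith), hp, hsign, ← hqb]
    field_simp
  have hdup := ascPochhammer_eval_two_mul ((b + 1 / 2) / 2) k
  rw [show 2 * ((b + 1 / 2) / 2) = b + 1 / 2 by ring,
    show (b + 1 / 2) / 2 + 1 / 2 = q by rw [hqb]; ring] at hdup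
  rw [Finset.sum_congr rfl hsummand, ← Finset.mul_sum,
    Finset.Nat.sum_antidiagonal_eq_sum_range_succ (fun n _ => (-1) ^ n *
      wellPoisedFactor (b + 1 / 2) n * gasperCoeff a b n * baileyKernel (b + 1 / 2) n k),
    sum_wellPoisedFactor_mul_gasperCoeff ha hb, ← hqb, hdup, neg_pow 4]
  have : poch ((b + 1 / 2) / 2) k ≠ 0 := (ascPochhammer_pos k _ (by positivity)).ne'
  have := ascPochhammer_pos k q (by positivity)
  generalize poch ((b + 1 / 2) / 2) k = P at *
  field_simp

theorem hasSum_gasperSqCoeff_mul_hyp0F1_sq (ha : 0 < a) (hab : 3 * a ≤ 2 * b)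
    (hab' : 2 * a ≤ b + 1 / 2) (y : ℝ) :
    HasSum (fun n : ℕ => gasperSqCoeff a b n * y ^ n * hyp0F1 ((b + 3 / 2) / 2 + n) (-y) ^ 2)
      (hyp1F2 a b (-4 * y)) := by
  have hb : 0 < b := by linarith
  convert hasSum_mul_hyp0F1_sq (summable_gasperSqCoeff_mul_pow ha hab hab' y)
    (by linarith : 1 / 2 < (b + 3 / 2) / 2) (-y) using 1
  refine tsum_congr fun k => ?_
  rw [mul_pow, mul_right_comm, ← sum_gasperSqCoeff_mul_hyp0F1MulCoeff ha hb, Finset.sum_mul]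
  refine Finset.sum_congr rfl fun x hx => ?_
  rw [← mem_antidiagonal.1 hx, pow_add, neg_pow y]
  ring

theorem hyp1F2_nonneg (ha : 0 < a) (hab : 3 * a ≤ 2 * b) (hab' : 2 * a ≤ b + 1 / 2) {z : ℝ}
    (hz : z ≤ 0) : 0 ≤ hyp1F2 a b z := by
  have expansion := hasSum_gasperSqCoeff_mul_hyp0F1_sq ha hab hab' (-z / 4)
  rw [show -4 * (-z / 4) = z by ring] at expansion
  refine expansion.nonneg fun n => ?_
  have := gasperSqCoeff_nonneg ha hab hab' n
  have : 0 ≤ -z := by linarith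
  positivity

theorem hyp1F2_pos (ha : 0 < a) (hab : 3 * a ≤ 2 * b) (hab' : 2 * a ≤ b + 1 / 2)
    (hne : (a, b) ≠ (1, 3 / 2)) {z : ℝ} (hz : z < 0) : 0 < hyp1F2 a b z := by
  obtain ⟨y, hy, rfl⟩ : ∃ y : ℝ, 0 < y ∧ z = -4 * y := ⟨-z / 4, by linarith, by ring⟩
  obtain ⟨N, hN⟩ := exists_nat_gt y
  have expansion := hasSum_gasperSqCoeff_mul_hyp0F1_sq ha hab hab' y
  refine lt_of_lt_of_le ?_ (le_hasSum expansion (N + 2) fun n _ => ?_)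
  · have := gasperSqCoeff_add_two_pos ha hab hab' hne N
    have : 0 < hyp0F1 ((b + 3 / 2) / 2 + (N + 2 : ℕ)) (-y) := by
      refine hyp0F1_neg_pos hy.le ?_
      push_cast
      linarith
    positivity
  · have := gasperSqCoeff_nonneg ha hab hab' n
    positivity

end Expansion

section Integral

theorem besselJ_eq_rpow_mul_hyp0F1 {α t : ℝ} (hα : ∀ n : ℕ, α + 1 ≠ -n) (ht : 0 < t) :
    besselJ α t = (t / 2) ^ α / Gamma (α + 1) * hyp0F1 (α + 1) (-1 / 4 * t ^ 2) := by
  rw [besselJ, hyp0F1, ← tsum_mul_left]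
  refine tsum_congr fun k => ?_
  rw [add_right_comm, Gamma_add_natCast hα, Real.rpow_add (by positivity),
    show (2 * (k : ℝ)) = ((2 * k : ℕ) : ℝ) by push_cast; rfl, Real.rpow_natCast, pow_mul,
    show -1 / 4 * t ^ 2 = -1 * (t / 2) ^ 2 by ring, mul_pow]
  ring

variable {s x : ℝ}

theorem integral_rpow_mul_sq_pow (hs : -1 < s) (hx : 0 < x) (c : ℝ) (k : ℕ) :
    ∫ t in (0 : ℝ)..x, t ^ s * (c * t ^ 2) ^ k =
      x ^ (s + 1) * (c * x ^ 2) ^ k / (s + 1 + 2 * k) := by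
  have hexp : -1 < s + (2 * k : ℕ) := by
    push_cast
    linarith [k.cast_nonneg (α := ℝ)]
  have integrand : (Set.Ioo 0 x).EqOn (fun t => t ^ s * (c * t ^ 2) ^ k)
      (fun t => c ^ k * t ^ (s + (2 * k : ℕ))) := by
    intro t ht
    dsimp only
    rw [Real.rpow_add ht.1, Real.rpow_natCast, mul_pow, pow_mul]
    ring
  rw [intervalIntegral.integral_congr_Ioo_of_le hx.le integrand,
    intervalIntegral.integral_const_mul, integral_rpow (Or.inl hexp), Real.zero_rpow (by linarith),
    add_right_comm, Real.rpow_add hx, Real.rpow_natCast, mul_pow, pow_mul]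
  push_cast
  ring

theorem integral_rpow_mul_hyp0F1 {b : ℝ} (hs : -1 < s) (hb : 0 < b) (hx : 0 < x) (c : ℝ) :
    ∫ t in (0 : ℝ)..x, t ^ s * hyp0F1 b (c * t ^ 2) =
      x ^ (s + 1) / (s + 1) * hyp1F2 ((s + 1) / 2) b (c * x ^ 2) := by
  have poch_pos (k : ℕ) := ascPochhammer_pos k b hb
  have termwise := intervalIntegral.hasSum_integral_of_dominated_convergence
    (μ := volume) (a := (0 : ℝ)) (b := x)
    (F := fun (k : ℕ) t => t ^ s * ((c * t ^ 2) ^ k / (k ! * poch b k)))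
    (f := fun t => t ^ s * hyp0F1 b (c * t ^ 2))
    (fun k t => t ^ s * ((|c| * x ^ 2) ^ k / (k ! * poch b k)))
    (fun k => Measurable.aestronglyMeasurable (by fun_prop))
    (fun k => .of_forall fun t ht => by
      rw [Set.uIoc_of_le hx.le] at ht
      have := poch_pos k
      have := ht.1
      rw [norm_mul, norm_div, norm_pow, norm_mul, norm_pow, Real.norm_of_nonneg (by positivity),
        Real.norm_of_nonneg this.le, Real.norm_of_nonneg (by positivity : 0 ≤ k ! * poch b k)]
      gcongr
      exacts [le_rfl, ht.2])
    (.of_forall fun t _ => (summable_hyp0F1 hb _).mul_left _)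
    (by
      simp only [tsum_mul_left]
      exact (intervalIntegral.intervalIntegrable_rpow' hs).mul_const _)
    (.of_forall fun t _ => (summable_hyp0F1 hb _).hasSum.mul_left _)
  rw [← termwise.tsum_eq, hyp1F2, ← tsum_mul_left]
  refine tsum_congr fun k => ?_
  simp only [← mul_div_assoc, intervalIntegral.integral_div, integral_rpow_mul_sq_pow hs hx]
  have := poch_pos k
  have : 0 < s + 1 := by linarith
  have : 0 < s + 1 + 2 * k := by positivity
  rw [show (s + 1) / 2 + (k : ℝ) = (s + 1 + 2 * k) / 2 by ring]
  field_simp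

theorem integral_rpow_mul_besselJ {α β : ℝ} (hα : -1 < α) (hβ : β < α + 1) (hx : 0 < x) :
    ∫ t in (0 : ℝ)..x, t ^ (-β) * besselJ α t =
      x ^ (α - β + 1) / (2 ^ α * Gamma (α + 1) * (α - β + 1)) *
        hyp1F2 ((α - β + 1) / 2) (α + 1) (-1 / 4 * x ^ 2) := by
  have hα' (n : ℕ) : α + 1 ≠ -n := by linarith [n.cast_nonneg (α := ℝ)]
  have integrand : (Set.Ioo 0 x).EqOn (fun t => t ^ (-β) * besselJ α t) (fun t =>
      1 / (2 ^ α * Gamma (α + 1)) * (t ^ (α - β) * hyp0F1 (α + 1) (-1 / 4 * t ^ 2))) := by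
    intro t ht
    dsimp only
    rw [besselJ_eq_rpow_mul_hyp0F1 hα' ht.1, Real.div_rpow ht.1.le zero_le_two, sub_eq_neg_add,
      Real.rpow_add ht.1]
    ring
  rw [intervalIntegral.integral_congr_Ioo_of_le hx.le integrand,
    intervalIntegral.integral_const_mul, integral_rpow_mul_hyp0F1 (by linarith) (by linarith) hx,
    ← mul_assoc, div_mul_div_comm, one_mul]

end Integral

theorem stmt9 (α β : ℝ) (hα : -1 < α)
    (hβ₁ : max (-1 / 2) (-(α + 1) / 3) ≤ β) (hβ₂ : β < α + 1) :
    (∀ x : ℝ, 0 < x → 0 ≤ ∫ t in (0 : ℝ)..x, t ^ (-β) * besselJ α t) ∧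
      ((α, β) ≠ (1 / 2, -1 / 2) →
        ∀ x : ℝ, 0 < x → 0 < ∫ t in (0 : ℝ)..x, t ^ (-β) * besselJ α t) := by
  obtain ⟨hβ, hαβ⟩ := max_le_iff.1 hβ₁
  have hs : 0 < α - β + 1 := by linarith
  have hΓ := Real.Gamma_pos_of_pos (by linarith : 0 < α + 1)
  refine ⟨fun x hx => ?_, fun hne x hx => ?_⟩ <;> rw [integral_rpow_mul_besselJ hα hβ₂ hx]
  · have := hyp1F2_nonneg (a := (α - β + 1) / 2) (b := α + 1) (z := -1 / 4 * x ^ 2) (by linarith)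
      (by linarith) (by linarith) (by nlinarith)
    positivity
  · have hne' : ((α - β + 1) / 2, α + 1) ≠ (1, 3 / 2) := fun h => hne <| by
      rw [Prod.mk.injEq] at h ⊢
      exact ⟨by linarith, by linarith⟩
    have := hyp1F2_pos (by linarith) (by linarith) (by linarith) hne'
      (z := -1 / 4 * x ^ 2) (by nlinarith)
    positivity
end

section
/- Let α be a real number with −1/2 < α ≤ 1/2, and let j > 0 be the second positive zero of the Bessel function J_α, i.e. J_α(j) = 0 and there exists exactly one z with 0 < z < j and J_α(z) = 0. If ∫₀^j t^{−α} J_α(t) dt = 0, then α ≤ −1/4. -/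
open Real

/-! Up to a positive constant, `t ^ (-α) * J_α(t)` is `₀F₁(; a; -y)` with `a = α + 1` and
`y = t² / 4`. For `3/4 ≤ a ≤ 3/2` this alternating series is `1` at `y = 0`, negative at `y = 4`
and positive at `y = 11`, so the second zero `j` of `J_α` satisfies `j² / 4 ≤ 11`. On `[0, 11]` the
series is bounded below by its first eight terms, and integrating these gives `j` times a
polynomial `Q_a` evaluated at `j² / 4`. The `k`-th coefficient of `Q_a` is that of `Q_{3/4}` times
the `k`-th moment of the beta distribution with parameters `3/4` and `a - 3/4`, so `Q_a` is an
average of dilates of `Q_{3/4}`, and a single numerical polynomial inequality, `Q_{3/4} > 0` on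
`[0, 11]`, settles every `α ≥ -1/4`. -/

open Set MeasureTheory ProbabilityTheory
open Finset (range mul_sum sum_congr sum_mul sum_range_succ sum_range_zero)
open scoped Nat

section BetaMoments

theorem Gamma_add_nat {x : ℝ} (hx : 0 < x) (k : ℕ) :
    Gamma (x + k) = (ascPochhammer ℝ k).eval x * Gamma x := by
  induction k with
  | zero => simp
  | succ k ih =>
    rw [Nat.cast_succ, ← add_assoc, Gamma_add_one (by positivity), ih, ascPochhammer_succ_eval]
    ring

variable {p q : ℝ}

theorem beta_add_nat_div_beta (hp : 0 < p) (hq : 0 < q) (k : ℕ) :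
    beta (p + k) q / beta p q =
      (ascPochhammer ℝ k).eval p / (ascPochhammer ℝ k).eval (p + q) := by
  have hGp := (Gamma_pos_of_pos hp).ne'
  have hGq := (Gamma_pos_of_pos hq).ne'
  have hGpq := (Gamma_pos_of_pos (add_pos hp hq)).ne'
  have hpq := (ascPochhammer_pos k _ (add_pos hp hq)).ne'
  rw [beta, beta, add_right_comm, Gamma_add_nat hp, Gamma_add_nat (add_pos hp hq)]
  field_simp

theorem betaPDFReal_nonneg (hp : 0 < p) (hq : 0 < q) (x : ℝ) : 0 ≤ betaPDFReal p q x := by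
  by_cases hx : 0 < x ∧ x < 1
  · exact (betaPDFReal_pos hx.1 hx.2 hp hq).le
  · rw [betaPDFReal, if_neg hx]

theorem integral_betaPDFReal (hp : 0 < p) (hq : 0 < q) : ∫ x, betaPDFReal p q x = 1 := by
  rw [integral_eq_lintegral_of_nonneg_ae (ae_of_all _ (betaPDFReal_nonneg hp hq))
    (stronglyMeasurable_betaPDFReal p q).aestronglyMeasurable]
  exact congrArg ENNReal.toReal (lintegral_betaPDF_eq_one hp hq)

theorem integrable_betaPDFReal (hp : 0 < p) (hq : 0 < q) : Integrable (betaPDFReal p q) :=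
  integrable_of_integral_eq_one (integral_betaPDFReal hp hq)

theorem pow_mul_betaPDFReal (hp : 0 < p) (hq : 0 < q) (k : ℕ) (x : ℝ) :
    x ^ k * betaPDFReal p q x = beta (p + k) q / beta p q * betaPDFReal (p + k) q x := by
  by_cases hx : 0 < x ∧ x < 1
  · have hβ := (beta_pos hp hq).ne'
    have hβk := (beta_pos (add_pos_of_pos_of_nonneg hp k.cast_nonneg) hq).ne'
    rw [betaPDFReal, betaPDFReal, if_pos hx, if_pos hx, add_sub_right_comm, rpow_add hx.1,
      rpow_natCast]
    field_simp
  · rw [betaPDFReal, betaPDFReal, if_neg hx, if_neg hx, mul_zero, mul_zero]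

theorem integrable_pow_mul_betaPDFReal (hp : 0 < p) (hq : 0 < q) (k : ℕ) :
    Integrable fun x ↦ x ^ k * betaPDFReal p q x := by
  simp only [pow_mul_betaPDFReal hp hq]
  exact (integrable_betaPDFReal (by positivity) hq).const_mul _

theorem integral_pow_mul_betaPDFReal (hp : 0 < p) (hq : 0 < q) (k : ℕ) :
    ∫ x, x ^ k * betaPDFReal p q x =
      (ascPochhammer ℝ k).eval p / (ascPochhammer ℝ k).eval (p + q) := by
  simp only [pow_mul_betaPDFReal hp hq, integral_const_mul]
  rw [integral_betaPDFReal (by positivity) hq, mul_one, beta_add_nat_div_beta hp hq]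

theorem integral_mul_betaPDFReal_pos (hp : 0 < p) (hq : 0 < q) {f : ℝ → ℝ}
    (hf : ∀ x ∈ Ioo 0 1, 0 < f x) (hfi : Integrable fun x ↦ f x * betaPDFReal p q x) :
    0 < ∫ x, f x * betaPDFReal p q x := by
  have hpos : ∀ x ∈ Ioo (0 : ℝ) 1, 0 < f x * betaPDFReal p q x := fun x hx ↦
    mul_pos (hf x hx) (betaPDFReal_pos hx.1 hx.2 hp hq)
  have hnonneg : ∀ x, 0 ≤ f x * betaPDFReal p q x := fun x ↦ by
    by_cases hx : 0 < x ∧ x < 1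
    · exact (hpos x hx).le
    · rw [betaPDFReal, if_neg hx, mul_zero]
  rw [integral_pos_iff_support_of_nonneg hnonneg hfi]
  calc (0 : ENNReal) < volume (Ioo (0 : ℝ) 1) := by simp
    _ ≤ _ := measure_mono fun x hx ↦ (hpos x hx).ne'

end BetaMoments

/-- The coefficient `1 / (k! (a)ₖ)` of `z ^ k` in the confluent hypergeometric limit function
`₀F₁(; a; z)`. -/
noncomputable def besselCoeff (a : ℝ) (k : ℕ) : ℝ := ((k ! : ℝ) * (ascPochhammer ℝ k).eval a)⁻¹

/-- The normalized Bessel function `₀F₁(; a; -y)`, through which `J_α(t)` is expressed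
with `a = α + 1` and `y = t² / 4`; its value at `y = 0` is `1`. -/
noncomputable def normalizedBessel (a y : ℝ) : ℝ := ∑' k : ℕ, (-1) ^ k * (besselCoeff a k * y ^ k)

section NormalizedBessel

variable {a : ℝ}

theorem besselCoeff_zero (a : ℝ) : besselCoeff a 0 = 1 := by simp [besselCoeff]

theorem besselCoeff_succ (a : ℝ) (k : ℕ) :
    besselCoeff a (k + 1) = besselCoeff a k / ((k + 1) * (a + k)) := by
  rw [besselCoeff, besselCoeff, Nat.factorial_succ, ascPochhammer_succ_eval, div_eq_mul_inv,
    ← mul_inv]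
  push_cast
  ring

theorem besselCoeff_pos (ha : 0 < a) (k : ℕ) : 0 < besselCoeff a k := by
  have := ascPochhammer_pos k a ha
  unfold besselCoeff
  positivity

theorem besselCoeff_le (ha : 0 < a) (k : ℕ) : besselCoeff a k ≤ a⁻¹ ^ k / k ! := by
  induction k with
  | zero => simp [besselCoeff_zero]
  | succ k ih =>
    calc besselCoeff a (k + 1) = besselCoeff a k / ((k + 1) * (a + k)) := besselCoeff_succ a k
      _ ≤ a⁻¹ ^ k / k ! / ((k + 1) * a) := by
        gcongr
        linarith [k.cast_nonneg (α := ℝ)]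
      _ = a⁻¹ ^ (k + 1) / (k + 1)! := by
        rw [Nat.factorial_succ, inv_pow, inv_pow, pow_succ]
        push_cast
        field_simp

theorem norm_normalizedBessel_term_le (ha : 0 < a) {y R : ℝ} (hy : |y| ≤ R) (k : ℕ) :
    ‖(-1) ^ k * (besselCoeff a k * y ^ k)‖ ≤ (a⁻¹ * R) ^ k / k ! := by
  have hc := besselCoeff_pos ha k
  calc ‖(-1) ^ k * (besselCoeff a k * y ^ k)‖ = besselCoeff a k * |y| ^ k := by
        simp [abs_of_pos hc]
    _ ≤ a⁻¹ ^ k / k ! * R ^ k := by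
        gcongr
        exact besselCoeff_le ha k
    _ = (a⁻¹ * R) ^ k / k ! := by ring

theorem summable_normalizedBessel (ha : 0 < a) (y : ℝ) :
    Summable fun k : ℕ ↦ (-1) ^ k * (besselCoeff a k * y ^ k) :=
  .of_norm_bounded (summable_pow_div_factorial _) (norm_normalizedBessel_term_le ha le_rfl)

theorem continuous_normalizedBessel (ha : 0 < a) : Continuous (normalizedBessel a) := by
  refine continuous_iff_continuousAt.2 fun y ↦ ?_
  have hcont : ContinuousOn (normalizedBessel a) (Icc (-(|y| + 1)) (|y| + 1)) :=
    continuousOn_tsum (fun k ↦ by fun_prop) (summable_pow_div_factorial _)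
      fun k z hz ↦ norm_normalizedBessel_term_le ha (abs_le.2 hz) k
  exact hcont.continuousAt (Icc_mem_nhds (by linarith [neg_abs_le y]) (by linarith [le_abs_self y]))

theorem normalizedBessel_zero (a : ℝ) : normalizedBessel a 0 = 1 := by
  rw [normalizedBessel, tsum_eq_single 0 fun k hk ↦ by simp [hk]]
  simp [besselCoeff_zero]

theorem besselJ_eq_normalizedBessel {α t : ℝ} (hα : -1 < α) (ht : 0 < t) :
    besselJ α t = (t / 2) ^ α / Gamma (α + 1) * normalizedBessel (α + 1) (t ^ 2 / 4) := by
  rw [besselJ, normalizedBessel, ← tsum_mul_left]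
  refine tsum_congr fun k ↦ ?_
  have hpow : (t / 2) ^ (2 * (k : ℝ) + α) = (t / 2) ^ α * (t ^ 2 / 4) ^ k := by
    rw [rpow_add (by positivity), show 2 * (k : ℝ) = (2 * k : ℕ) by push_cast; rfl, rpow_natCast,
      pow_mul, mul_comm]
    ring
  rw [hpow, add_right_comm, Gamma_add_nat (by linarith), besselCoeff]
  ring

end NormalizedBessel

section AlternatingBounds

theorem tsum_alternating_mem_Icc {f : ℕ → ℝ} {n : ℕ} (hs : Summable fun k ↦ (-1) ^ k * f k)
    (hf : AntitoneOn f (Ici (2 * n))) :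
    ∑' k, (-1) ^ k * f k ∈ Icc (∑ k ∈ range (2 * n), (-1) ^ k * f k)
      (∑ k ∈ range (2 * n + 1), (-1) ^ k * f k) := by
  have hshift : ∀ k, (-1) ^ (k + 2 * n) * f (k + 2 * n) = (-1) ^ k * f (k + 2 * n) := fun k ↦ by
    simp [pow_add]
  have htail : Antitone fun k ↦ f (k + 2 * n) := fun k l hkl ↦
    hf (by simp) (by simp) (by lia)
  have hlim := ((summable_nat_add_iff (2 * n)).2 hs).hasSum.tendsto_sum_nat
  have hsplit := hs.sum_add_tsum_nat_add (2 * n)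
  simp only [hshift] at hlim hsplit
  have hlower := htail.alternating_series_le_tendsto hlim 0
  have hupper := htail.tendsto_le_alternating_series hlim 0
  rw [sum_range_succ, ← hsplit]
  simp only [mul_zero, zero_add, Finset.sum_range_zero, Finset.sum_range_one, pow_zero, one_mul]
    at hlower hupper
  rw [pow_mul, neg_one_sq, one_pow, one_mul]
  exact ⟨le_add_of_nonneg_right hlower, add_le_add_right hupper _⟩

theorem normalizedBessel_mem_Icc {a y : ℝ} (ha : 0 < a) (hy : 0 ≤ y) {n : ℕ}
    (hyn : y ≤ (2 * n + 1) * (a + 2 * n)) :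
    normalizedBessel a y ∈ Icc (∑ k ∈ range (2 * n), (-1) ^ k * (besselCoeff a k * y ^ k))
      (∑ k ∈ range (2 * n + 1), (-1) ^ k * (besselCoeff a k * y ^ k)) := by
  refine tsum_alternating_mem_Icc (summable_normalizedBessel ha y)
    (antitoneOn_nat_Ici_of_succ_le fun k hk ↦ ?_)
  have hc := besselCoeff_pos ha k
  have hk' : (2 * n : ℝ) ≤ k := mod_cast hk
  have hratio : y / ((k + 1) * (a + k)) ≤ 1 :=
    div_le_one_of_le₀ (hyn.trans (by gcongr)) (by positivity)
  calc besselCoeff a (k + 1) * y ^ (k + 1)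
      = besselCoeff a k * y ^ k * (y / ((k + 1) * (a + k))) := by rw [besselCoeff_succ]; ring
    _ ≤ besselCoeff a k * y ^ k := mul_le_of_le_one_right (by positivity) hratio

variable {a : ℝ}

theorem normalizedBessel_four_neg (ha₁ : 3 / 4 ≤ a) (ha₂ : a ≤ 3 / 2) :
    normalizedBessel a 4 < 0 := by
  have ha : 0 < a := by linarith
  refine (normalizedBessel_mem_Icc (n := 2) ha (by norm_num) (by norm_num; linarith)).2.trans_lt ?_
  have hsum : ∑ k ∈ range 5, (-1) ^ k * (besselCoeff a k * 4 ^ k) =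
      -(26 / 3 * a - 8 / 3 + 5 * a ^ 2 - 2 * a ^ 3 - a ^ 4) /
        (a * (a + 1) * (a + 2) * (a + 3)) := by
    simp only [sum_range_succ, sum_range_zero, besselCoeff_succ, besselCoeff_zero]
    push_cast
    field_simp
    ring
  have hnum : 0 < 26 / 3 * a - 8 / 3 + 5 * a ^ 2 - 2 * a ^ 3 - a ^ 4 := by
    nlinarith [mul_nonneg (sq_nonneg a) (sub_nonneg.2 ha₂)]
  rw [hsum]
  exact div_neg_of_neg_of_pos (neg_lt_zero.2 hnum) (by positivity)

theorem normalizedBessel_eleven_pos (ha₁ : 3 / 4 ≤ a) (ha₂ : a ≤ 3 / 2) :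
    0 < normalizedBessel a 11 := by
  have ha : 0 < a := by linarith
  refine lt_of_lt_of_le ?_
    (normalizedBessel_mem_Icc (n := 4) ha (by norm_num) (by norm_num; linarith)).1
  have hsum : ∑ k ∈ range 8, (-1) ^ k * (besselCoeff a k * 11 ^ k) =
      (a ^ 7 + 10 * a ^ 6 + 9 / 2 * a ^ 5 - 1211 / 6 * a ^ 4 - 11195 / 24 * a ^ 3 +
        12011 / 30 * a ^ 2 + 209027 / 144 * a - 1921469 / 5040) /
        (a * (a + 1) * (a + 2) * (a + 3) * (a + 4) * (a + 5) * (a + 6)) := by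
    simp only [sum_range_succ, sum_range_zero, besselCoeff_succ, besselCoeff_zero]
    push_cast
    field_simp
    ring
  have hnum : 0 < a ^ 7 + 10 * a ^ 6 + 9 / 2 * a ^ 5 - 1211 / 6 * a ^ 4 - 11195 / 24 * a ^ 3 +
      12011 / 30 * a ^ 2 + 209027 / 144 * a - 1921469 / 5040 := by
    obtain ⟨s, rfl⟩ : ∃ s, a = 3 / 4 + s := ⟨a - 3 / 4, by ring⟩
    have hs₀ : 0 ≤ s := by linarith
    have hs : s ≤ 3 / 4 := by linarith
    have h2 : 0 ≤ s * (3 / 4 - s) := mul_nonneg hs₀ (by linarith)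
    have h3 : s ^ 3 ≤ (3 / 4) ^ 3 := by gcongr
    have h4 : s ^ 4 ≤ (3 / 4) ^ 4 := by gcongr
    have h5 : 0 ≤ s ^ 5 := by positivity
    have h6 : 0 ≤ s ^ 6 := by positivity
    have h7 : 0 ≤ s ^ 7 := by positivity
    linarith
  rw [hsum]
  positivity

end AlternatingBounds

section SecondZero

theorem exists_normalizedBessel_zeros {a : ℝ} (ha₁ : 3 / 4 ≤ a) (ha₂ : a ≤ 3 / 2) :
    ∃ y₁ ∈ Ioo 0 4, ∃ y₂ ∈ Ioo 4 11, normalizedBessel a y₁ = 0 ∧ normalizedBessel a y₂ = 0 := by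
  have hcont := continuous_normalizedBessel (a := a) (by linarith)
  have h0 := normalizedBessel_zero a
  have h4 := normalizedBessel_four_neg ha₁ ha₂
  have h11 := normalizedBessel_eleven_pos ha₁ ha₂
  obtain ⟨y₁, hy₁, hz₁⟩ := intermediate_value_Ioo' (by norm_num) hcont.continuousOn
    (show (0 : ℝ) ∈ Ioo (normalizedBessel a 4) (normalizedBessel a 0) from ⟨h4, by simp [h0]⟩)
  obtain ⟨y₂, hy₂, hz₂⟩ := intermediate_value_Ioo (by norm_num) hcont.continuousOn
    (show (0 : ℝ) ∈ Ioo (normalizedBessel a 4) (normalizedBessel a 11) from ⟨h4, h11⟩)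
  exact ⟨y₁, hy₁, y₂, hy₂, hz₁, hz₂⟩

theorem besselJ_two_mul_sqrt_eq_zero {α y : ℝ} (hα : -1 < α) (hy : 0 < y)
    (hz : normalizedBessel (α + 1) y = 0) : besselJ α (2 * √y) = 0 := by
  rw [besselJ_eq_normalizedBessel hα (by positivity), mul_pow, sq_sqrt hy.le,
    show 2 ^ 2 * y / 4 = y by ring, hz, mul_zero]

theorem sq_div_four_le_of_subsingleton_zeros {α j : ℝ} (hα₁ : -1 / 4 ≤ α) (hα₂ : α ≤ 1 / 2)
    (hj : 0 < j) (hzeros : {z ∈ Ioo 0 j | besselJ α z = 0}.Subsingleton) : j ^ 2 / 4 ≤ 11 := by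
  by_contra! hlarge
  obtain ⟨y₁, hy₁, y₂, hy₂, hz₁, hz₂⟩ :=
    exists_normalizedBessel_zeros (a := α + 1) (by linarith) (by linarith)
  have hmem : ∀ y, 0 < y → y < 11 → normalizedBessel (α + 1) y = 0 →
      2 * √y ∈ {z ∈ Ioo 0 j | besselJ α z = 0} := fun y hy hy11 hz ↦
    ⟨⟨by positivity, by nlinarith [sqrt_nonneg y, sq_sqrt hy.le]⟩,
      besselJ_two_mul_sqrt_eq_zero (by linarith) hy hz⟩
  have heq := hzeros (hmem y₁ hy₁.1 (by linarith [hy₁.2]) hz₁)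
    (hmem y₂ (by linarith [hy₂.1]) hy₂.2 hz₂)
  linarith [sqrt_lt_sqrt hy₁.1.le (hy₁.2.trans hy₂.1)]

end SecondZero

section Positivity

theorem besselCoeff_mul_moment {b a : ℝ} (hb : 0 < b) (hba : b < a) (k : ℕ) :
    besselCoeff b k * ∫ x, x ^ k * betaPDFReal b (a - b) x = besselCoeff a k := by
  have hPb := (ascPochhammer_pos k b hb).ne'
  rw [integral_pow_mul_betaPDFReal hb (sub_pos.2 hba), add_sub_cancel, besselCoeff, besselCoeff]
  field_simp

/-- Raising the parameter of `besselCoeff` averages the polynomial over dilations with a beta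
weight, which preserves positivity. -/
theorem sum_mul_besselCoeff_mul_pow_pos {b a : ℝ} (hb : 0 < b) (hba : b ≤ a) {n : ℕ} {d : ℕ → ℝ}
    {Y : ℝ} (hpos : ∀ x ∈ Icc 0 Y, 0 < ∑ k ∈ range n, d k * besselCoeff b k * x ^ k) {y : ℝ}
    (hy : y ∈ Icc 0 Y) : 0 < ∑ k ∈ range n, d k * besselCoeff a k * y ^ k := by
  obtain rfl | hba := hba.eq_or_lt
  · exact hpos y hy
  have hq : 0 < a - b := sub_pos.2 hba
  have hexpand : ∀ x, (∑ k ∈ range n, d k * besselCoeff b k * (y * x) ^ k) *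
      betaPDFReal b (a - b) x = ∑ k ∈ range n, d k * besselCoeff b k * y ^ k *
        (x ^ k * betaPDFReal b (a - b) x) := fun x ↦ by
    rw [sum_mul]
    exact sum_congr rfl fun k _ ↦ by ring
  have hint : ∀ k ∈ range n, Integrable fun x ↦
      d k * besselCoeff b k * y ^ k * (x ^ k * betaPDFReal b (a - b) x) := fun k _ ↦
    (integrable_pow_mul_betaPDFReal hb hq k).const_mul _
  calc 0 < ∫ x, (∑ k ∈ range n, d k * besselCoeff b k * (y * x) ^ k) *
        betaPDFReal b (a - b) x := by
        refine integral_mul_betaPDFReal_pos hb hq (fun x hx ↦ hpos _ ⟨mul_nonneg hy.1 hx.1.le,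
          (mul_le_of_le_one_right hy.1 hx.2.le).trans hy.2⟩) ?_
        simp only [hexpand]
        exact integrable_finsetSum _ hint
    _ = ∑ k ∈ range n, d k * besselCoeff a k * y ^ k := by
        simp only [hexpand]
        rw [integral_finsetSum _ hint]
        refine sum_congr rfl fun k _ ↦ ?_
        rw [integral_const_mul, ← besselCoeff_mul_moment hb hba k]
        ring

theorem sum_besselCoeff_three_fourths_pos {u : ℝ} (hu : u ≤ 11) :
    0 < ∑ k ∈ range 8, (-1) ^ k / (2 * k + 1) * besselCoeff (3 / 4) k * u ^ k := by
  obtain ⟨s, rfl⟩ : ∃ s, u = 7 + s := ⟨u - 7, by ring⟩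
  -- Near its minimum, close to `u = 7`, the polynomial is a positive quadratic plus
  -- terms `s ^ (2 * i) * (c - d * s)` that are nonnegative for `s ≤ 4`.
  have hexpand : ∑ k ∈ range 8, (-1) ^ k / (2 * k + 1) * besselCoeff (3 / 4) k * (7 + s) ^ k =
      7011816481 / 563754745125 + 2891708956 / 563754745125 * s +
      s ^ 2 * (8345089576 / 1315427738625 - 6939613664 / 5524796502225 * s) +
      s ^ 4 * (2690528 / 34315506225 - 6708608 / 1315427738625 * s) +
      s ^ 6 * (10496 / 358753019625 - 1024 / 193174702875 * s) := by
    simp only [sum_range_succ, sum_range_zero, besselCoeff_succ, besselCoeff_zero]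
    push_cast
    ring
  have h2 : 0 ≤ s ^ 2 * (8345089576 / 1315427738625 - 6939613664 / 5524796502225 * s - 1 / 1000) :=
    mul_nonneg (by positivity) (by linarith)
  have h4 : 0 ≤ s ^ 4 * (2690528 / 34315506225 - 6708608 / 1315427738625 * s) :=
    mul_nonneg (by positivity) (by linarith)
  have h6 : 0 ≤ s ^ 6 * (10496 / 358753019625 - 1024 / 193174702875 * s) :=
    mul_nonneg (by positivity) (by linarith)
  have hquad : 0 < 7011816481 / 563754745125 + 2891708956 / 563754745125 * s + s ^ 2 / 1000 := by
    nlinarith [sq_nonneg (s + 5 / 2)]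
  linarith

theorem integral_sum_besselCoeff (a j : ℝ) (n : ℕ) :
    ∫ t in (0 : ℝ)..j, ∑ k ∈ range n, (-1) ^ k * (besselCoeff a k * (t ^ 2 / 4) ^ k) =
      j * ∑ k ∈ range n, (-1) ^ k / (2 * k + 1) * besselCoeff a k * (j ^ 2 / 4) ^ k := by
  rw [intervalIntegral.integral_finsetSum
    (fun k _ ↦ (by fun_prop : Continuous _).intervalIntegrable _ _), mul_sum]
  refine sum_congr rfl fun k _ ↦ ?_
  have hterm : ∀ t : ℝ, (-1) ^ k * (besselCoeff a k * (t ^ 2 / 4) ^ k) =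
      (-1) ^ k * besselCoeff a k / 4 ^ k * t ^ (2 * k) := fun t ↦ by
    rw [div_pow, ← pow_mul]
    ring
  simp only [hterm, intervalIntegral.integral_const_mul, integral_pow]
  rw [zero_pow (by lia), div_pow, ← pow_mul]
  push_cast
  ring

theorem integral_normalizedBessel_pos {a j : ℝ} (ha : 3 / 4 ≤ a) (hj : 0 < j)
    (hj11 : j ^ 2 / 4 ≤ 11) : 0 < ∫ t in (0 : ℝ)..j, normalizedBessel a (t ^ 2 / 4) := by
  have ha0 : 0 < a := by linarith
  have hcont : Continuous fun t : ℝ ↦ normalizedBessel a (t ^ 2 / 4) :=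
    (continuous_normalizedBessel ha0).comp (by fun_prop)
  calc 0 < j * ∑ k ∈ range 8, (-1) ^ k / (2 * k + 1) * besselCoeff a k * (j ^ 2 / 4) ^ k :=
        mul_pos hj <| sum_mul_besselCoeff_mul_pow_pos (by norm_num) ha
          (fun x hx ↦ sum_besselCoeff_three_fourths_pos hx.2) ⟨by positivity, hj11⟩
    _ = ∫ t in (0 : ℝ)..j, ∑ k ∈ range 8, (-1) ^ k * (besselCoeff a k * (t ^ 2 / 4) ^ k) :=
        (integral_sum_besselCoeff a j 8).symm
    _ ≤ ∫ t in (0 : ℝ)..j, normalizedBessel a (t ^ 2 / 4) := by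
        refine intervalIntegral.integral_mono_on hj.le
          ((by fun_prop : Continuous _).intervalIntegrable _ _) (hcont.intervalIntegrable _ _)
          fun t ht ↦ (normalizedBessel_mem_Icc (n := 4) ha0 (by positivity) ?_).1
        have htj : t ^ 2 ≤ j ^ 2 := pow_le_pow_left₀ ht.1 ht.2 2
        norm_num
        linarith

theorem integral_rpow_neg_mul_besselJ {α j : ℝ} (hα : -1 < α) (hj : 0 ≤ j) :
    ∫ t in (0 : ℝ)..j, t ^ (-α) * besselJ α t =
      (1 / 2) ^ α / Gamma (α + 1) * ∫ t in (0 : ℝ)..j, normalizedBessel (α + 1) (t ^ 2 / 4) := by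
  rw [← intervalIntegral.integral_const_mul]
  refine intervalIntegral.integral_congr_ae (ae_of_all _ fun t ht ↦ ?_)
  have ht0 : 0 < t := (uIoc_of_le hj ▸ ht).1
  have hpow : t ^ (-α) * (t / 2) ^ α = (1 / 2) ^ α := by
    rw [show t / 2 = t * (1 / 2) by ring, mul_rpow ht0.le (by norm_num), ← mul_assoc,
      ← rpow_add ht0, neg_add_cancel, rpow_zero, one_mul]
  rw [besselJ_eq_normalizedBessel hα ht0, ← hpow]
  ring

end Positivity

theorem stmt11_general {α j : ℝ} (hα₁ : -1 / 4 ≤ α) (hα₂ : α ≤ 1 / 2) (hj : 0 < j)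
    (hzeros : {z ∈ Ioo 0 j | besselJ α z = 0}.Subsingleton) :
    0 < ∫ t in (0 : ℝ)..j, t ^ (-α) * besselJ α t := by
  have hΓ : 0 < Gamma (α + 1) := Gamma_pos_of_pos (by linarith)
  rw [integral_rpow_neg_mul_besselJ (by linarith) hj.le]
  exact mul_pos (by positivity) <| integral_normalizedBessel_pos (by linarith) hj <|
    sq_div_four_le_of_subsingleton_zeros hα₁ hα₂ hj hzeros

theorem stmt11 (α : ℝ) (hα₁ : -1 / 2 < α) (hα₂ : α ≤ 1 / 2)
    (j : ℝ) (hj : 0 < j) (hjzero : besselJ α j = 0)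
    (hsecond : ∃! z : ℝ, 0 < z ∧ z < j ∧ besselJ α z = 0)
    (hroot : ∫ t in (0 : ℝ)..j, t ^ (-α) * besselJ α t = 0) :
    α ≤ -1 / 4 := by
  by_contra! hα
  exact (stmt11_general hα.le hα₂ hj fun x hx y hy ↦ hsecond.unique ⟨hx.1.1, hx.1.2, hx.2⟩
    ⟨hy.1.1, hy.1.2, hy.2⟩).ne' hroot
end

section
/- Let α > −1, γ > −1 and β < α + 1 be real numbers. Then for every x > 0, ∫₀ˣ (x² − t²)^γ t^{−β} J_α(t) dt = [B(γ+1, (α−β+1)/2) / (2^{α+1} Γ(α+1))] · x^{α−β+2γ+1} · ₁F₂((α−β+1)/2; α+1, (α−β+1)/2 + γ + 1; −x²/4), where B denotes Euler's beta function. -/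
open Real

/-- Pochhammer symbol `(a)_k = a (a+1) ⋯ (a+k-1)` for a real number `a`. -/
noncomputable def poch (a : ℝ) (k : ℕ) : ℝ := ∏ i ∈ Finset.range k, (a + i)

/-- The generalized hypergeometric series `₁F₂(a; b, c; z)`. -/
noncomputable def oneF2 (a b c z : ℝ) : ℝ :=
  ∑' k : ℕ, poch a k / ((k.factorial : ℝ) * poch b k * poch c k) * z ^ k

/-- Euler's beta function `B(p,q) = Γ(p)Γ(q)/Γ(p+q)`. -/
noncomputable def eulerBeta (p q : ℝ) : ℝ :=
  Real.Gamma p * Real.Gamma q / Real.Gamma (p + q)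

/-!
For `t > 0`, `J_α(t)` is `(t / 2) ^ α / Γ(α + 1)` times the entire function `₀F₁(; α + 1; ·)` at
`-t² / 4`, so the integral is one of `₀F₁` in the variable `t²` against the weight
`(x² - t²) ^ γ * t ^ (α - β)`. The substitution `u = t²` turns the moments of this weight into Euler
beta integrals, and the quotient `B(q, p + k) / B(q, p) = (p)_k / (p + q)_k` supplies exactly the
extra pair of parameters that turns `₀F₁` into `₁F₂` when the series is integrated term by term.
-/

open Filter MeasureTheory

lemma poch_succ (b : ℝ) (n : ℕ) : poch b (n + 1) = poch b n * (b + n) :=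
  Finset.prod_range_succ _ _

lemma poch_ne_zero {b : ℝ} (hb : ∀ m : ℕ, b ≠ -m) (n : ℕ) : poch b n ≠ 0 :=
  Finset.prod_ne_zero_iff.2 fun i _ => mt eq_neg_of_add_eq_zero_left (hb i)

lemma Gamma_add_nat_eq_poch_mul_Gamma {b : ℝ} (hb : ∀ m : ℕ, b ≠ -m) (n : ℕ) :
    Gamma (b + n) = poch b n * Gamma b := by
  induction n with
  | zero => simp [poch]
  | succ n ih =>
    have hbn : b + n ≠ 0 := mt eq_neg_of_add_eq_zero_left (hb n)
    rw [Nat.cast_succ, ← add_assoc, Gamma_add_one hbn, ih, poch_succ]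
    ring

lemma ne_neg_natCast_of_pos {b : ℝ} (hb : 0 < b) (m : ℕ) : b ≠ -m :=
  ((neg_nonpos.2 m.cast_nonneg).trans_lt hb).ne'

lemma eulerBeta_add_nat {p q : ℝ} (hp : ∀ m : ℕ, p ≠ -m) (hpq : ∀ m : ℕ, p + q ≠ -m) (n : ℕ) :
    eulerBeta q (p + n) = eulerBeta q p * (poch p n / poch (p + q) n) := by
  have hΓ : Gamma (p + q) ≠ 0 := Gamma_ne_zero hpq
  have hpoch : poch (p + q) n ≠ 0 := poch_ne_zero hpq n
  rw [eulerBeta, eulerBeta, add_comm q (p + n), add_right_comm, add_comm q p,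
    Gamma_add_nat_eq_poch_mul_Gamma hp, Gamma_add_nat_eq_poch_mul_Gamma hpq]
  field_simp

/-- The confluent hypergeometric limit function `₀F₁(; b; z)`, through which the Bessel function
is expressed. As for `oneF2`, the junk convention `1 / 0 = 0` applies to the terms in which
`poch b k` vanishes. -/
noncomputable def zeroF1 (b z : ℝ) : ℝ :=
  ∑' k : ℕ, 1 / ((k.factorial : ℝ) * poch b k) * z ^ k

lemma summable_zeroF1 (b z : ℝ) :
    Summable fun k : ℕ => 1 / ((k.factorial : ℝ) * poch b k) * z ^ k := by
  have hratio : Tendsto (fun k : ℕ => z / ((k + 1) * (b + k))) atTop (nhds 0) := by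
    refine tendsto_const_nhds.div_atTop (Tendsto.atTop_mul_atTop₀ ?_ ?_)
    · exact tendsto_atTop_add_const_right _ _ tendsto_natCast_atTop_atTop
    · exact tendsto_atTop_add_const_left _ _ tendsto_natCast_atTop_atTop
  refine summable_of_ratio_norm_eventually_le one_half_lt_one ?_
  filter_upwards [hratio.norm.eventually_le_const (by simp : ‖(0 : ℝ)‖ < 1 / 2)] with k hk
  calc ‖1 / (((k + 1).factorial : ℝ) * poch b (k + 1)) * z ^ (k + 1)‖
      = ‖z / ((k + 1) * (b + k))‖ * ‖1 / ((k.factorial : ℝ) * poch b k) * z ^ k‖ := by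
        -- If `b + k = 0`, both sides vanish because `1 / 0 = 0`.
        rw [← norm_mul, Nat.factorial_succ, poch_succ]
        congr 1
        simp only [Nat.cast_mul, Nat.cast_succ, div_eq_mul_inv, mul_inv]
        ring
    _ ≤ 1 / 2 * ‖1 / ((k.factorial : ℝ) * poch b k) * z ^ k‖ := by gcongr

lemma besselJ_eq_zeroF1 {α : ℝ} (hα : ∀ m : ℕ, α + 1 ≠ -m) {t : ℝ} (ht : 0 < t) :
    besselJ α t = t ^ α / (2 ^ α * Gamma (α + 1)) * zeroF1 (α + 1) (-1 / 4 * t ^ 2) := by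
  rw [besselJ, zeroF1, ← tsum_mul_left]
  refine tsum_congr fun k => ?_
  have hpow : (t / 2) ^ (2 * (k : ℝ) + α) = t ^ α / 2 ^ α * (t ^ 2 / 4) ^ k := by
    rw [add_comm, rpow_add (by positivity), div_rpow ht.le two_pos.le, rpow_mul (by positivity),
      rpow_natCast, rpow_two, div_pow t 2 2]
    norm_num
  rw [hpow, add_right_comm, Gamma_add_nat_eq_poch_mul_Gamma hα,
    show -1 / 4 * t ^ 2 = -1 * (t ^ 2 / 4) by ring, mul_pow (-1)]
  ring

lemma hasSum_integral_mul_pow {X 𝕜 : Type*} [RCLike 𝕜] {mX : MeasurableSpace X} {μ : Measure X}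
    {w φ : X → 𝕜} {c : ℕ → 𝕜} {R : ℝ} (hw : Integrable w μ) (hφ : AEStronglyMeasurable φ μ)
    (hφR : ∀ᵐ t ∂μ, ‖φ t‖ ≤ R) (hc : Summable fun k => ‖c k‖ * R ^ k) :
    HasSum (fun k => c k * ∫ t, w t * φ t ^ k ∂μ) (∫ t, w t * ∑' k, c k * φ t ^ k ∂μ) := by
  have hterm : ∀ {t}, ‖φ t‖ ≤ R → ∀ k, ‖c k * φ t ^ k‖ ≤ ‖c k‖ * R ^ k := fun ht k => by
    rw [norm_mul, norm_pow]
    gcongr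
  simp_rw [← integral_const_mul]
  refine hasSum_integral_of_dominated_convergence (fun k t => ‖w t‖ * (‖c k‖ * R ^ k))
    (fun k => (hw.1.mul (hφ.pow k)).const_mul (c k)) (fun k => ?_)
    (.of_forall fun t => hc.mul_left _) ?_ ?_
  · filter_upwards [hφR] with t ht
    rw [mul_left_comm, norm_mul]
    gcongr
    exact hterm ht k
  · simp_rw [tsum_mul_left]
    exact hw.norm.mul_const _
  · filter_upwards [hφR] with t ht
    simpa only [mul_left_comm] using (hc.of_norm_bounded (hterm ht)).hasSum.mul_left (w t)

section EulerIntegral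

lemma integral_rpow_mul_sub_rpow {p q a : ℝ} (hp : 0 < p) (hq : 0 < q) (ha : 0 < a) :
    ∫ u in (0 : ℝ)..a, u ^ (p - 1) * (a - u) ^ (q - 1) = a ^ (p + q - 1) * eulerBeta q p := by
  have hcast : ∫ u in (0 : ℝ)..a, (u : ℂ) ^ ((p : ℂ) - 1) * ((a : ℂ) - u) ^ ((q : ℂ) - 1) =
      ∫ u in (0 : ℝ)..a, ((u ^ (p - 1) * (a - u) ^ (q - 1) : ℝ) : ℂ) := by
    refine intervalIntegral.integral_congr fun u hu => ?_
    rw [Set.uIcc_of_le ha.le] at hu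
    simp [Complex.ofReal_cpow hu.1, Complex.ofReal_cpow (sub_nonneg.2 hu.2)]
  have hscaled := Complex.betaIntegral_scaled p q ha
  rw [hcast, intervalIntegral.integral_ofReal,
    Complex.betaIntegral_eq_Gamma_mul_div _ _ (by simpa) (by simpa), ← Complex.ofReal_add,
    ← Complex.ofReal_one, ← Complex.ofReal_sub, ← Complex.ofReal_cpow ha.le] at hscaled
  simp only [Complex.Gamma_ofReal] at hscaled
  rw [eulerBeta, add_comm q p, mul_comm (Gamma q)]
  exact_mod_cast hscaled

variable {p q x : ℝ}

lemma integral_sq_sub_sq_rpow_mul_rpow (hp : 0 < p) (hq : 0 < q) (hx : 0 < x) :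
    ∫ t in (0 : ℝ)..x, (x ^ 2 - t ^ 2) ^ (q - 1) * t ^ (2 * p - 1) =
      x ^ (2 * (p + q - 1)) / 2 * eulerBeta q p := by
  have hsubst := intervalIntegral.integral_comp_mul_deriv_of_deriv_nonneg
    (a := 0) (b := x) (f := fun t => t ^ 2) (f' := fun t => 2 * t)
    (g := fun u => u ^ (p - 1) * (x ^ 2 - u) ^ (q - 1)) (by fun_prop)
    (fun t _ => by simpa using hasDerivAt_pow 2 t)
    (fun t ht => by rw [min_eq_left hx.le] at ht; linarith [ht.1])
  rw [zero_pow two_ne_zero, integral_rpow_mul_sub_rpow hp hq (by positivity), ← rpow_two,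
    ← rpow_mul hx.le] at hsubst
  rw [div_mul_eq_mul_div, ← hsubst, eq_div_iff two_ne_zero, ← intervalIntegral.integral_mul_const]
  refine intervalIntegral.integral_congr_uIoo fun t ht => ?_
  rw [Set.uIoo_of_le hx.le] at ht
  have hpow : t ^ (2 * p - 1) = (t ^ 2) ^ (p - 1) * t := by
    rw [← rpow_two, ← rpow_mul ht.1.le, ← rpow_add_one ht.1.ne']
    ring_nf
  simp only [Function.comp_apply, hpow, rpow_two]
  ring

lemma intervalIntegrable_sq_sub_sq_rpow_mul_rpow (hp : 0 < p) (hq : 0 < q) (hx : 0 < x) :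
    IntervalIntegrable (fun t => (x ^ 2 - t ^ 2) ^ (q - 1) * t ^ (2 * p - 1)) volume 0 x := by
  refine intervalIntegral.intervalIntegrable_of_integral_ne_zero ?_
  rw [integral_sq_sub_sq_rpow_mul_rpow hp hq hx]
  have hB : 0 < eulerBeta q p := ProbabilityTheory.beta_pos hq hp
  positivity

lemma integral_sq_sub_sq_rpow_mul_rpow_mul_pow (hp : 0 < p) (hq : 0 < q) (hx : 0 < x) (z : ℝ)
    (k : ℕ) :
    ∫ t in (0 : ℝ)..x, (x ^ 2 - t ^ 2) ^ (q - 1) * t ^ (2 * p - 1) * (z * t ^ 2) ^ k =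
      x ^ (2 * (p + q - 1)) / 2 * eulerBeta q p *
        (poch p k / poch (p + q) k * (z * x ^ 2) ^ k) := by
  have hshift : ∀ {t : ℝ}, 0 < t → ∀ s : ℝ, t ^ (s + 2 * k) = t ^ s * (t ^ 2) ^ k := fun ht s => by
    rw [← pow_mul, ← rpow_add_natCast ht.ne']
    push_cast
    rfl
  calc ∫ t in (0 : ℝ)..x, (x ^ 2 - t ^ 2) ^ (q - 1) * t ^ (2 * p - 1) * (z * t ^ 2) ^ k
      = ∫ t in (0 : ℝ)..x, z ^ k * ((x ^ 2 - t ^ 2) ^ (q - 1) * t ^ (2 * (p + k) - 1)) := by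
        refine intervalIntegral.integral_congr_uIoo fun t ht => ?_
        rw [Set.uIoo_of_le hx.le] at ht
        simp only [show 2 * (p + k) - 1 = 2 * p - 1 + 2 * k by ring, hshift ht.1, mul_pow z]
        ring
    _ = z ^ k * (x ^ (2 * (p + q - 1) + 2 * k) / 2 * eulerBeta q (p + k)) := by
        rw [intervalIntegral.integral_const_mul,
          integral_sq_sub_sq_rpow_mul_rpow (by positivity) hq hx]
        ring_nf
    _ = _ := by
        rw [hshift hx, eulerBeta_add_nat (ne_neg_natCast_of_pos hp)
          (ne_neg_natCast_of_pos (add_pos hp hq)), mul_pow z]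
        ring

theorem integral_sq_sub_sq_rpow_mul_rpow_mul_zeroF1 (hp : 0 < p) (hq : 0 < q) (hx : 0 < x)
    (b z : ℝ) :
    ∫ t in (0 : ℝ)..x, (x ^ 2 - t ^ 2) ^ (q - 1) * t ^ (2 * p - 1) * zeroF1 b (z * t ^ 2) =
      x ^ (2 * (p + q - 1)) / 2 * eulerBeta q p * oneF2 p b (p + q) (z * x ^ 2) := by
  have hbound : ∀ t ∈ Set.Ioc 0 x, ‖z * t ^ 2‖ ≤ ‖z * x ^ 2‖ := fun t ⟨ht₀, htx⟩ => by
    rw [norm_mul, norm_mul, norm_pow, norm_pow, norm_of_nonneg ht₀.le, norm_of_nonneg hx.le]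
    gcongr
  have hsummable : Summable fun k : ℕ =>
      ‖1 / ((k.factorial : ℝ) * poch b k)‖ * ‖z * x ^ 2‖ ^ k :=
    (summable_zeroF1 b (z * x ^ 2)).norm.congr fun k => by rw [norm_mul, norm_pow]
  have hcont : Continuous fun t : ℝ => z * t ^ 2 := by fun_prop
  have hsum := hasSum_integral_mul_pow (μ := volume.restrict (Set.Ioc 0 x))
    (intervalIntegrable_sq_sub_sq_rpow_mul_rpow hp hq hx).1 hcont.aestronglyMeasurable
    (ae_restrict_of_forall_mem measurableSet_Ioc hbound) hsummable
  simp only [← intervalIntegral.integral_of_le hx.le,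
    integral_sq_sub_sq_rpow_mul_rpow_mul_pow hp hq hx] at hsum
  refine hsum.tsum_eq.symm.trans ?_
  rw [oneF2, ← tsum_mul_left]
  exact tsum_congr fun k => by ring

end EulerIntegral

theorem stmt13_general (α β γ : ℝ) (hα : ∀ n : ℕ, α + 1 ≠ -n) (hγ : -1 < γ) (hβ : β < α + 1) :
    ∀ x : ℝ, 0 < x →
      ∫ t in (0 : ℝ)..x, (x ^ 2 - t ^ 2) ^ γ * t ^ (-β) * besselJ α t =
        eulerBeta (γ + 1) ((α - β + 1) / 2) / ((2 : ℝ) ^ (α + 1) * Real.Gamma (α + 1)) *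
          x ^ (α - β + 2 * γ + 1) *
          oneF2 ((α - β + 1) / 2) (α + 1) ((α - β + 1) / 2 + γ + 1) (-x ^ 2 / 4) := by
  intro x hx
  have ha : 0 < (α - β + 1) / 2 := by linarith
  have hEuler := integral_sq_sub_sq_rpow_mul_rpow_mul_zeroF1 ha (neg_lt_iff_pos_add.1 hγ) hx
    (α + 1) (-1 / 4)
  have hintegrand : Set.EqOn (fun t => (x ^ 2 - t ^ 2) ^ γ * t ^ (-β) * besselJ α t)
      (fun t => 1 / (2 ^ α * Gamma (α + 1)) *
        ((x ^ 2 - t ^ 2) ^ (γ + 1 - 1) * t ^ (2 * ((α - β + 1) / 2) - 1) *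
          zeroF1 (α + 1) (-1 / 4 * t ^ 2))) (Set.uIoo 0 x) := fun t ht => by
    rw [Set.uIoo_of_le hx.le] at ht
    simp only [besselJ_eq_zeroF1 hα ht.1, add_sub_cancel_right,
      show 2 * ((α - β + 1) / 2) - 1 = -β + α by ring, rpow_add ht.1]
    ring
  rw [intervalIntegral.integral_congr_uIoo hintegrand, intervalIntegral.integral_const_mul, hEuler,
    rpow_add_one two_ne_zero, ← add_assoc,
    show 2 * ((α - β + 1) / 2 + γ + 1 - 1) = α - β + 2 * γ + 1 by ring,
    show -x ^ 2 / 4 = -1 / 4 * x ^ 2 by ring]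
  ring

theorem stmt13 (α β γ : ℝ) (hα : -1 < α) (hγ : -1 < γ) (hβ : β < α + 1) :
    ∀ x : ℝ, 0 < x →
      ∫ t in (0 : ℝ)..x, (x ^ 2 - t ^ 2) ^ γ * t ^ (-β) * besselJ α t =
        eulerBeta (γ + 1) ((α - β + 1) / 2) / ((2 : ℝ) ^ (α + 1) * Real.Gamma (α + 1)) *
          x ^ (α - β + 2 * γ + 1) *
          oneF2 ((α - β + 1) / 2) (α + 1) ((α - β + 1) / 2 + γ + 1) (-x ^ 2 / 4) :=
  stmt13_general α β γ (ne_neg_natCast_of_pos (neg_lt_iff_pos_add.1 hα)) hγ hβ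
end
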